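/- arXiv:1312.5189 — 2 statements merged into one kernel-verified Lean document; each statement's English description precedes it below -/
import Mathlib

section
/- Let m be a positive integer, let σ ∈ ℝ satisfy m−1 < σ < m, and let q ≥ 1 be an integer. Let r : [0,1] → ℝ be (m−1)-times continuously differentiable on [0,1]. Define φ(x) = D*^σ r(x) := (d/dx)^m [ (1/Γ(m−σ)) ∫₀ˣ (x-t)^{m−σ−1} ( r(t) − T_{m−1}[r;0](t) ) dt ], where T_{m−1}[r;0] is the Taylor polynomial of r of degree m−1 at 0. Assume φ exists on (0,1], extends to a continuous function on [0,1], is q-times continuously differentiable on (0,1], and satisfies |φ^{(i)}(x)| ≤ C₀ x^{σ−m+1−i} for i = 1, …, q and all 0 < x ≤ 1, for some constant C₀. Then r is (q+m−1)-times continuously differentiable on (0,1], and there exists a constant C, independent of x, such that for all 0 < x ≤ 1: |r^{(i)}(x)| ≤ C for i = 0, 1, …, m−1, and |r^{(i)}(x)| ≤ C x^{σ−i} for i = m, m+1, …, q+m−1. -/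
/-- `w = r − T_{m−1}[r;0]`, where `T_{m−1}[r;0]` is the Taylor polynomial of `r` of
degree `m−1` at `0` (computed with derivatives within `[0,1]`). -/
noncomputable def wfun (m : ℕ) (r : ℝ → ℝ) : ℝ → ℝ :=
  fun t => r t - taylorWithinEval r (m - 1) (Set.Icc 0 1) 0 t

/-- `J(x) = (1/Γ(m−σ)) ∫₀ˣ (x-t)^{m−σ−1} w(t) dt`; its `m`-th derivative is the
Caputo fractional derivative `D*^σ r`. -/
noncomputable def Jfun (m : ℕ) (σ : ℝ) (r : ℝ → ℝ) : ℝ → ℝ :=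
  fun x => (1 / Real.Gamma ((m:ℝ) - σ)) *
    ∫ t in (0:ℝ)..x, (x - t) ^ ((m:ℝ) - σ - 1) * wfun m r t

open MeasureTheory Set Filter Topology

noncomputable def fI (a : ℝ) (f : ℝ → ℝ) (x : ℝ) : ℝ :=
  (1 / Real.Gamma a) * ∫ t in (0:ℝ)..x, (x - t) ^ (a - 1) * f t

lemma beta_scaled {a b c : ℝ} (ha : 0 < a) (hb : 0 < b) (hc : 0 < c) :
    ∫ t in (0:ℝ)..c, t ^ (b - 1) * (c - t) ^ (a - 1) =
      c ^ (b + a - 1) * (Real.Gamma b * Real.Gamma a / Real.Gamma (b + a)) := by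
  have h := Complex.betaIntegral_scaled (b:ℂ) (a:ℂ) hc
  have h2 := Complex.Gamma_mul_Gamma_eq_betaIntegral (s := (b:ℂ)) (t := (a:ℂ)) (by simpa) (by simpa)
  have hG : Real.Gamma (b + a) ≠ 0 := (Real.Gamma_pos_of_pos (by positivity)).ne'
  have h3 : Complex.betaIntegral b a = ((Real.Gamma b * Real.Gamma a / Real.Gamma (b + a) : ℝ) : ℂ) := by
    rw [← Complex.ofReal_add] at h2
    simp only [Complex.Gamma_ofReal] at h2
    push_cast
    rw [h2]
    have : ((Real.Gamma (b+a) : ℝ) : ℂ) ≠ 0 := by exact_mod_cast hG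
    field_simp
  rw [h3] at h
  have h4 : (∫ t in (0:ℝ)..c, (t : ℂ) ^ ((b:ℂ) - 1) * ((c:ℂ) - t) ^ ((a:ℂ) - 1)) =
      ((∫ t in (0:ℝ)..c, t ^ (b - 1) * (c - t) ^ (a - 1) : ℝ) : ℂ) := by
    rw [← intervalIntegral.integral_ofReal]
    apply intervalIntegral.integral_congr
    intro t ht
    rw [uIcc_of_le hc.le] at ht
    simp only
    rw [Complex.ofReal_mul, Complex.ofReal_cpow ht.1, Complex.ofReal_cpow (by linarith [ht.2])]
    push_cast; rfl
  rw [h4] at h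
  have h5 : (c:ℂ) ^ ((b:ℂ) + a - 1) = ((c ^ (b + a - 1) : ℝ) : ℂ) := by
    rw [Complex.ofReal_cpow hc.le]; push_cast; rfl
  rw [h5] at h
  exact_mod_cast h

lemma beta_shift {a b s x : ℝ} (ha : 0 < a) (hb : 0 < b) (hc : s < x) :
    ∫ t in s..x, (x - t) ^ (a - 1) * (t - s) ^ (b - 1) =
      (x - s) ^ (a + b - 1) * (Real.Gamma a * Real.Gamma b / Real.Gamma (a + b)) := by
  have h := beta_scaled ha hb (sub_pos.2 hc)
  have := intervalIntegral.integral_comp_sub_right (a := s) (b := x)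
    (fun t => t ^ (b - 1) * (x - s - t) ^ (a - 1)) s
  simp only [sub_self] at this
  rw [← this] at h
  rw [add_comm a b, mul_comm (Real.Gamma a), ← h]
  congr 1; ext t; rw [mul_comm]; congr 2; ring

lemma kint {a : ℝ} (ha : 0 < a) (x y : ℝ) :
    IntervalIntegrable (fun t => (x - t) ^ (a - 1)) volume y x := by
  have := (intervalIntegral.intervalIntegrable_rpow' (a := x - y) (b := 0) (r := a - 1) (by linarith)).comp_sub_left x
  simpa using this

lemma kint_val {a : ℝ} (ha : 0 < a) (x y : ℝ) :
    ∫ t in y..x, (x - t) ^ (a - 1) = (x - y) ^ a / a := by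
  rw [intervalIntegral.integral_comp_sub_left (fun t => t ^ (a-1)) x, integral_rpow (by left; linarith)]
  simp [Real.zero_rpow ha.ne']

lemma kfint {a : ℝ} (ha : 0 < a) {f : ℝ → ℝ} (hf : ContinuousOn f (Icc 0 1)) {x : ℝ} (hx : x ∈ Icc (0:ℝ) 1) :
    IntervalIntegrable (fun t => (x - t) ^ (a - 1) * f t) volume 0 x := by
  apply (kint ha x 0).mul_continuousOn
  rw [uIcc_of_le hx.1]
  exact hf.mono (Icc_subset_Icc le_rfl hx.2)

lemma fI_congr {a : ℝ} {f g : ℝ → ℝ} (h : EqOn f g (Icc 0 1)) : EqOn (fI a f) (fI a g) (Icc 0 1) := by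
  intro x hx
  unfold fI
  congr 1
  apply intervalIntegral.integral_congr
  intro t ht
  rw [uIcc_of_le hx.1] at ht
  simp only
  rw [h ⟨ht.1, ht.2.trans hx.2⟩]

lemma fI_scaled {a : ℝ} (ha : 0 < a) (f : ℝ → ℝ) {x : ℝ} (hx : 0 ≤ x) :
    fI a f x = x ^ a * ((1 / Real.Gamma a) * ∫ s in (0:ℝ)..1, (1 - s) ^ (a - 1) * f (x * s)) := by
  rcases hx.eq_or_lt with rfl | hx
  · simp [fI, Real.zero_rpow ha.ne']
  unfold fI
  have h := intervalIntegral.smul_integral_comp_mul_left (a := 0) (b := 1)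
    (fun t => (x - t) ^ (a - 1) * f t) x
  simp only [mul_zero, mul_one] at h
  rw [← h]
  have : ∀ s ∈ uIcc (0:ℝ) 1, (x - x * s) ^ (a-1) * f (x * s) = x ^ (a-1) * ((1 - s) ^ (a - 1) * f (x * s)) := by
    intro s hs
    rw [uIcc_of_le zero_le_one] at hs
    rw [← mul_assoc, ← Real.mul_rpow hx.le (by linarith [hs.2])]
    congr 2; ring
  rw [intervalIntegral.integral_congr this, intervalIntegral.integral_const_mul]
  have : x ^ a = x * x ^ (a-1) := by
    rw [Real.rpow_sub_one hx.ne']; field_simp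
  rw [this, smul_eq_mul]; ring

lemma fI_cont {a : ℝ} (ha : 0 < a) {f : ℝ → ℝ} (hf : ContinuousOn f (Icc 0 1)) :
    ContinuousOn (fI a f) (Icc 0 1) := by
  have : EqOn (fI a f) (fun x => x ^ a * ((1 / Real.Gamma a) * ∫ s in (0:ℝ)..1, (1 - s) ^ (a - 1) * f (x * s))) (Icc 0 1) :=
    fun x hx => fI_scaled ha f hx.1
  refine ContinuousOn.congr ?_ this
  refine ContinuousOn.mul (fun x hx => (Real.continuousAt_rpow_const x a (Or.inr ha.le)).continuousWithinAt) ?_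
  refine continuousOn_const.mul ?_
  obtain ⟨M, hM⟩ := isCompact_Icc.exists_bound_of_continuousOn hf
  have hmem : ∀ x ∈ Icc (0:ℝ) 1, ∀ s ∈ Ioc (0:ℝ) 1, x * s ∈ Icc (0:ℝ) 1 := fun x hx s hs =>
    ⟨mul_nonneg hx.1 hs.1.le, mul_le_one₀ hx.2 hs.1.le hs.2⟩
  have key := fun (x : ℝ) (hx : x ∈ Icc (0:ℝ) 1) =>
    intervalIntegral.continuousWithinAt_of_dominated_interval (μ := volume) (a := 0) (b := 1)
    (F := fun x s => (1 - s) ^ (a - 1) * f (x * s)) (bound := fun s => (1 - s) ^ (a - 1) * M)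
    (x₀ := x) (s := Icc (0:ℝ) 1) ?_ ?_ ?_ ?_
  · exact key
  · filter_upwards [self_mem_nhdsWithin] with y hy
    rw [uIoc_of_le zero_le_one]
    refine AEStronglyMeasurable.mul (Measurable.aestronglyMeasurable (by fun_prop)) ?_
    refine ContinuousOn.aestronglyMeasurable ?_ measurableSet_Ioc
    exact hf.comp (by fun_prop) (fun s hs => hmem y hy s hs)
  · filter_upwards [self_mem_nhdsWithin] with y hy
    refine ae_of_all _ fun s hs => ?_
    rw [uIoc_of_le zero_le_one] at hs
    rw [norm_mul, Real.norm_of_nonneg (Real.rpow_nonneg (by linarith [hs.2]) _)]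
    exact mul_le_mul_of_nonneg_left (hM _ (hmem y hy s hs)) (Real.rpow_nonneg (by linarith [hs.2]) _)
  · exact (kint ha 1 0).mul_const M
  · refine ae_of_all _ fun s hs => ?_
    rw [uIoc_of_le zero_le_one] at hs
    refine continuousWithinAt_const.mul ?_
    exact ContinuousWithinAt.comp (g := f) (f := fun y => y * s) (t := Icc 0 1) (hf _ (hmem x hx s hs)) (by fun_prop) (fun y hy => hmem y hy s hs)

lemma fI_semi_aux {a b : ℝ} (ha : 0 < a) (hb : 0 < b) {f : ℝ → ℝ} (hf : ContinuousOn f (Icc 0 1))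
    {x : ℝ} (hx : x ∈ Icc (0:ℝ) 1) :
    ∫ t in (0:ℝ)..x, (x - t) ^ (a - 1) * ∫ s in (0:ℝ)..t, (t - s) ^ (b - 1) * f s =
     (Real.Gamma a * Real.Gamma b / Real.Gamma (a + b)) * ∫ s in (0:ℝ)..x, (x - s) ^ (a + b - 1) * f s := by
  obtain ⟨M, hM⟩ := isCompact_Icc.exists_bound_of_continuousOn hf
  set μ := (volume : Measure ℝ).restrict (Ioc 0 x) with hμ
  let F : ℝ → ℝ → ℝ := fun t s => if s < t then (x - t) ^ (a - 1) * (t - s) ^ (b - 1) else 0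
  have hmeas : Measurable (Function.uncurry F) := by
    refine Measurable.ite (measurableSet_lt measurable_snd measurable_fst) (by fun_prop) measurable_const
  have hsub : ∀ t ∈ Ioc (0:ℝ) x, Ioc (0:ℝ) x ∩ Iio t = Ioo 0 t := by
    intro t ht; ext s
    simp only [mem_inter_iff, mem_Ioc, mem_Iio, mem_Ioo]
    constructor
    · rintro ⟨⟨h1, h2⟩, h3⟩; exact ⟨h1, h3⟩
    · rintro ⟨h1, h2⟩; exact ⟨⟨h1, h2.le.trans ht.2⟩, h2⟩
  have hsub' : ∀ s ∈ Ioc (0:ℝ) x, Ioc (0:ℝ) x ∩ Ioi s = Ioc s x := by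
    intro s hs; ext t
    simp only [mem_inter_iff, mem_Ioc, mem_Ioi]
    constructor
    · rintro ⟨⟨h1, h2⟩, h3⟩; exact ⟨h3, h2⟩
    · rintro ⟨h1, h2⟩; exact ⟨⟨hs.1.trans h1, h2⟩, h1⟩
  have hFt : ∀ t, F t = (Iio t).indicator (fun s => (x - t) ^ (a - 1) * (t - s) ^ (b - 1)) := by
    intro t; ext s; simp [F, indicator]
  have hFs : ∀ s, (fun t => F t s) = (Ioi s).indicator (fun t => (x - t) ^ (a - 1) * (t - s) ^ (b - 1)) := by
    intro t; ext s; simp [F, indicator]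
  have hint : Integrable (Function.uncurry F) (μ.prod μ) := by
    rw [integrable_prod_iff hmeas.aestronglyMeasurable]
    constructor
    · filter_upwards [ae_restrict_mem measurableSet_Ioc] with t ht
      have : (fun y => Function.uncurry F (t, y)) = F t := rfl
      rw [this, hFt, integrable_indicator_iff measurableSet_Iio]
      rw [IntegrableOn, hμ, Measure.restrict_restrict measurableSet_Iio, inter_comm, hsub t ht]
      have := ((kint hb t 0).const_mul ((x - t) ^ (a - 1)))
      rw [intervalIntegrable_iff_integrableOn_Ioo_of_le ht.1.le] at this
      exact this
    · have h1 : Integrable (fun t => (x - t) ^ (a - 1) * (t ^ b / b)) μ := by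
        have : IntervalIntegrable (fun t => (x - t) ^ (a - 1) * (t ^ b / b)) volume 0 x := by
          apply (kint ha x 0).mul_continuousOn
          exact (continuousOn_id.rpow_const (fun _ _ => Or.inr hb.le)).div_const b
        rw [intervalIntegrable_iff_integrableOn_Ioc_of_le hx.1] at this
        exact this
      refine h1.congr ?_
      filter_upwards [ae_restrict_mem measurableSet_Ioc] with t ht
      have : (fun y => ‖Function.uncurry F (t, y)‖) = (Iio t).indicator (fun s => (x - t) ^ (a - 1) * (t - s) ^ (b - 1)) := by
        ext s
        simp only [Function.uncurry, F, indicator, mem_Iio]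
        split_ifs with h
        · rw [Real.norm_of_nonneg]
          exact mul_nonneg (Real.rpow_nonneg (by linarith [ht.2]) _) (Real.rpow_nonneg (by linarith) _)
        · simp
      rw [this, integral_indicator measurableSet_Iio, hμ, Measure.restrict_restrict measurableSet_Iio, inter_comm, hsub t ht,
        integral_const_mul, ← integral_Ioc_eq_integral_Ioo, ← intervalIntegral.integral_of_le ht.1.le, kint_val hb, sub_zero]
  have hint2 : Integrable (Function.uncurry fun t s => F t s * f s) (μ.prod μ) := by
    have : AEStronglyMeasurable f μ := by
      refine ContinuousOn.aestronglyMeasurable (hf.mono ?_) measurableSet_Ioc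
      exact fun s hs => ⟨hs.1.le, hs.2.trans hx.2⟩
    refine Integrable.mul_bdd (c := M) (f := Function.uncurry F) (g := fun p => f p.2) hint ?_ ?_
    · exact this.comp_snd
    · have : ∀ᵐ s ∂μ, ‖f s‖ ≤ M := by
        filter_upwards [ae_restrict_mem measurableSet_Ioc] with t ht
        exact hM t ⟨ht.1.le, ht.2.trans hx.2⟩
      exact Measure.quasiMeasurePreserving_snd.ae this
  have hswap := integral_integral_swap hint2
  rw [intervalIntegral.integral_of_le hx.1, intervalIntegral.integral_of_le hx.1, ← integral_const_mul]
  convert hswap using 1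
  · refine setIntegral_congr_fun measurableSet_Ioc fun t ht => ?_
    have : (fun s => F t s * f s) = (Iio t).indicator (fun s => (x - t) ^ (a - 1) * ((t - s) ^ (b - 1) * f s)) := by
      ext s; simp only [F, indicator, mem_Iio]; split_ifs
      · ring
      · simp
    rw [this, integral_indicator measurableSet_Iio, hμ, Measure.restrict_restrict measurableSet_Iio, inter_comm, hsub t ht,
        integral_const_mul, ← integral_Ioc_eq_integral_Ioo, ← intervalIntegral.integral_of_le ht.1.le]
  · rw [← hμ, hμ, integral_Ioc_eq_integral_Ioo, integral_Ioc_eq_integral_Ioo]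
    refine setIntegral_congr_fun measurableSet_Ioo fun s hs => ?_
    rw [integral_mul_const, hFs, integral_indicator measurableSet_Ioi, Measure.restrict_restrict measurableSet_Ioi, inter_comm, hsub' s ⟨hs.1, hs.2.le⟩,
      ← intervalIntegral.integral_of_le hs.2.le, beta_shift ha hb hs.2]
    ring

lemma fI_semi {a b : ℝ} (ha : 0 < a) (hb : 0 < b) {f : ℝ → ℝ} (hf : ContinuousOn f (Icc 0 1)) :
    EqOn (fI a (fI b f)) (fI (a + b) f) (Icc 0 1) := by
  intro x hx
  have h := fI_semi_aux ha hb hf hx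
  unfold fI
  have h1 : ∀ t, (x - t) ^ (a - 1) * (1 / Real.Gamma b * ∫ s in (0:ℝ)..t, (t - s) ^ (b - 1) * f s) =
    (1 / Real.Gamma b) * ((x - t) ^ (a - 1) * ∫ s in (0:ℝ)..t, (t - s) ^ (b - 1) * f s) := fun t => by ring
  simp only [h1]
  rw [intervalIntegral.integral_const_mul, h]
  have := (Real.Gamma_pos_of_pos ha).ne'
  have := (Real.Gamma_pos_of_pos hb).ne'
  field_simp

lemma fI_one (f : ℝ → ℝ) : fI 1 f = fun x => ∫ t in (0:ℝ)..x, f t := by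
  ext x; simp [fI]

lemma fI_comm_one {a : ℝ} (ha : 0 < a) {f : ℝ → ℝ} (hf : ContinuousOn f (Icc 0 1)) :
    EqOn (fI a (fI 1 f)) (fI 1 (fI a f)) (Icc 0 1) := by
  intro x hx
  rw [fI_semi ha one_pos hf hx, fI_semi one_pos ha hf hx, add_comm]

noncomputable def Pn : ℕ → (ℝ → ℝ) → (ℝ → ℝ)
  | 0, f => f
  | n + 1, f => fI 1 (Pn n f)

lemma Pn_cont (n : ℕ) {f : ℝ → ℝ} (hf : ContinuousOn f (Icc 0 1)) : ContinuousOn (Pn n f) (Icc 0 1) := by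
  induction n with
  | zero => exact hf
  | succ n ih => exact fI_cont one_pos ih

lemma Pn_congr (n : ℕ) {f g : ℝ → ℝ} (h : EqOn f g (Icc 0 1)) : EqOn (Pn n f) (Pn n g) (Icc 0 1) := by
  induction n with
  | zero => exact h
  | succ n ih => exact fI_congr ih

lemma fI_Pn (n : ℕ) {a : ℝ} (ha : 0 < a) {f : ℝ → ℝ} (hf : ContinuousOn f (Icc 0 1)) :
    EqOn (fI a (Pn n f)) (Pn n (fI a f)) (Icc 0 1) := by
  induction n with
  | zero => exact fun x _ => rfl
  | succ n ih => exact (fI_comm_one ha (Pn_cont n hf)).trans (fI_congr ih)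

lemma fI_one_deriv {f : ℝ → ℝ} (hf : ContinuousOn f (Icc 0 1)) {x : ℝ} (hx : x ∈ Icc (0:ℝ) 1) :
    HasDerivWithinAt (fI 1 f) (f x) (Icc 0 1) x := by
  rw [fI_one]
  have : Fact (x ∈ Icc (0:ℝ) 1) := ⟨hx⟩
  refine intervalIntegral.integral_hasDerivWithinAt_right ?_ ?_ (hf x hx)
  · refine (hf.mono ?_).intervalIntegrable
    rw [uIcc_of_le hx.1]; exact Icc_subset_Icc le_rfl hx.2
  · exact hf.stronglyMeasurableAtFilter_nhdsWithin measurableSet_Icc x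

lemma Pn_deriv (n : ℕ) {f : ℝ → ℝ} (hf : ContinuousOn f (Icc 0 1)) :
    EqOn (iteratedDerivWithin n (Pn n f) (Icc 0 1)) f (Icc 0 1) := by
  induction n with
  | zero => intro x _; simp [Pn]
  | succ n ih =>
    intro x hx
    rw [iteratedDerivWithin_succ', ← ih hx]
    refine iteratedDerivWithin_congr (fun y hy => ?_) hx
    exact (fI_one_deriv (Pn_cont n hf) hy).derivWithin (uniqueDiffOn_Icc zero_lt_one y hy)

lemma ftc_fI {G g : ℝ → ℝ} (hG : ContinuousOn G (Icc 0 1)) (hg : ContinuousOn g (Icc 0 1))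
    (hd : ∀ x ∈ Ioo (0:ℝ) 1, HasDerivAt G (g x) x) (h0 : G 0 = 0) : EqOn G (fI 1 g) (Icc 0 1) := by
  intro x hx
  rw [fI_one]
  have h1 := hg.mono (Icc_subset_Icc le_rfl hx.2)
  have := intervalIntegral.integral_eq_sub_of_hasDerivAt_of_le hx.1 (hG.mono (Icc_subset_Icc le_rfl hx.2))
    (fun y hy => hd y ⟨hy.1, hy.2.trans_le hx.2⟩) (ContinuousOn.intervalIntegrable (by rwa [uIcc_of_le hx.1]))
  simp only
  rw [this, h0, sub_zero]

lemma w_Pn (n : ℕ) {r : ℝ → ℝ} (hr : ContDiffOn ℝ n r (Icc 0 1)) :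
    EqOn (fun t => r t - taylorWithinEval r n (Icc 0 1) 0 t)
      (Pn n (fun t => iteratedDerivWithin n r (Icc 0 1) t - iteratedDerivWithin n r (Icc 0 1) 0)) (Icc 0 1) := by
  have hu : UniqueDiffOn ℝ (Icc (0:ℝ) 1) := uniqueDiffOn_Icc zero_lt_one
  induction n generalizing r with
  | zero => intro x _; simp [Pn]
  | succ n ih =>
    have hr' : ContDiffOn ℝ n (derivWithin r (Icc 0 1)) (Icc 0 1) := hr.derivWithin hu (by norm_cast)
    have ih := ih hr'
    have hd : ∀ x ∈ Icc (0:ℝ) 1, HasDerivWithinAt (fun t => r t - taylorWithinEval r (n+1) (Icc 0 1) 0 t)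
       (derivWithin r (Icc 0 1) x - taylorWithinEval (derivWithin r (Icc 0 1)) n (Icc 0 1) 0 x) (Icc 0 1) x := by
      intro x hx
      refine HasDerivWithinAt.sub ?_ (hasDerivAt_taylorWithinEval_succ r n).hasDerivWithinAt
      exact (hr.differentiableOn (by simp) _ hx).hasDerivWithinAt
    have hc : ContinuousOn (fun t => iteratedDerivWithin (n+1) r (Icc 0 1) t - iteratedDerivWithin (n+1) r (Icc 0 1) 0) (Icc 0 1) :=
      (hr.continuousOn_iteratedDerivWithin le_rfl hu).sub continuousOn_const
    simp only [← iteratedDerivWithin_succ'] at ih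
    refine (ftc_fI (fun x hx => (hd x hx).continuousWithinAt) ?_
      (fun x hx => (hd x ⟨hx.1.le, hx.2.le⟩).hasDerivAt (Icc_mem_nhds hx.1 hx.2)) (by simp)).trans (fI_congr ih)
    exact (Pn_cont n hc).congr ih

lemma abel {α : ℝ} (h0 : 0 < α) (h1 : α < 1) {v φ : ℝ → ℝ} (hv : ContinuousOn v (Icc 0 1))
    (hφ : ContinuousOn φ (Icc 0 1)) (hd : ∀ x ∈ Ioo (0:ℝ) 1, HasDerivAt (fI (1 - α) v) (φ x) x) :
    EqOn v (fI α φ) (Icc 0 1) := by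
  have h1' : 0 < 1 - α := by linarith
  have hu := ftc_fI (fI_cont h1' hv) hφ hd (by simp [fI])
  have e : EqOn (fI 1 v) (fI 1 (fI α φ)) (Icc 0 1) := by
    have e1 := fI_semi h0 h1' hv
    rw [add_sub_cancel] at e1
    exact e1.symm.trans ((fI_congr hu).trans (fI_comm_one h0 hφ))
  intro x hx
  have a1 := fI_one_deriv hv hx
  have a2 := (fI_one_deriv (fI_cont h0 hφ) hx).congr e (e hx)
  exact (uniqueDiffOn_Icc zero_lt_one x hx).eq_deriv _ a1 a2

noncomputable def Nf (α : ℝ) (i : ℕ) (p : ℝ → ℝ) (x : ℝ) : ℝ :=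
  ∫ s in (0:ℝ)..1, (1 - s) ^ (α - 1) * (s ^ i * p (x * s))

lemma Nf_meas (α : ℝ) (i : ℕ) {p : ℝ → ℝ} (hp : ContinuousOn p (Ioc 0 1)) {x : ℝ} (hx : x ∈ Ioc (0:ℝ) 1) :
    AEStronglyMeasurable (fun s => (1 - s) ^ (α - 1) * (s ^ i * p (x * s))) (volume.restrict (Ioc 0 1)) := by
  refine AEStronglyMeasurable.mul (Measurable.aestronglyMeasurable (by fun_prop)) ?_
  refine ContinuousOn.aestronglyMeasurable ?_ measurableSet_Ioc
  refine ContinuousOn.mul (by fun_prop) (hp.comp (by fun_prop) fun s hs => ?_)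
  exact ⟨mul_pos hx.1 hs.1, mul_le_one₀ hx.2 hs.1.le hs.2⟩

lemma Nf_le (α : ℝ) (i : ℕ) {p : ℝ → ℝ} {K : ℝ}
    (hb : ∀ y ∈ Ioc (0:ℝ) 1, |p y| ≤ K / y ^ i) {x s : ℝ} (hx : x ∈ Ioc (0:ℝ) 1) (hs : s ∈ Ioc (0:ℝ) 1) :
    ‖(1 - s) ^ (α - 1) * (s ^ i * p (x * s))‖ ≤ (1 - s) ^ (α - 1) * (K / x ^ i) := by
  have h0 : 0 ≤ (1 - s) ^ (α - 1) := Real.rpow_nonneg (by linarith [hs.2]) _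
  have hs0 := hs.1
  have hx0 := hx.1
  rw [norm_mul, Real.norm_of_nonneg h0]
  refine mul_le_mul_of_nonneg_left ?_ h0
  rw [norm_mul, Real.norm_of_nonneg (by positivity), Real.norm_eq_abs]
  have := hb (x * s) ⟨mul_pos hx.1 hs.1, mul_le_one₀ hx.2 hs.1.le hs.2⟩
  calc s ^ i * |p (x * s)| ≤ s ^ i * (K / (x * s) ^ i) := by gcongr
    _ = K / x ^ i := by rw [mul_pow]; field_simp

lemma Nf_int {α : ℝ} (h0 : 0 < α) (i : ℕ) {p : ℝ → ℝ} (hp : ContinuousOn p (Ioc 0 1)) {K : ℝ}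
    (hb : ∀ y ∈ Ioc (0:ℝ) 1, |p y| ≤ K / y ^ i) {x : ℝ} (hx : x ∈ Ioc (0:ℝ) 1) :
    IntervalIntegrable (fun s => (1 - s) ^ (α - 1) * (s ^ i * p (x * s))) volume 0 1 := by
  refine ((kint h0 1 0).mul_const (K / x ^ i)).mono_fun ?_ ?_
  · rw [uIoc_of_le zero_le_one]; exact Nf_meas α i hp hx
  · rw [uIoc_of_le zero_le_one]
    filter_upwards [ae_restrict_mem measurableSet_Ioc] with s hs
    exact (Nf_le α i hb hx hs).trans (Real.le_norm_self _)

lemma Nf_bound {α : ℝ} (h0 : 0 < α) (i : ℕ) {p : ℝ → ℝ} {K : ℝ}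
    (hb : ∀ y ∈ Ioc (0:ℝ) 1, |p y| ≤ K / y ^ i) {x : ℝ} (hx : x ∈ Ioc (0:ℝ) 1) :
    |Nf α i p x| ≤ (K / α) / x ^ i := by
  have h := intervalIntegral.norm_integral_le_of_norm_le (a := 0) (b := 1) (μ := volume)
    (f := fun s => (1 - s) ^ (α - 1) * (s ^ i * p (x * s))) (g := fun s => (1 - s) ^ (α - 1) * (K / x ^ i))
    zero_le_one (ae_of_all _ fun s hs => Nf_le α i hb hx hs) ((kint h0 1 0).mul_const (K / x ^ i))
  rw [intervalIntegral.integral_mul_const, kint_val h0] at h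
  rw [← Real.norm_eq_abs]
  refine h.trans (le_of_eq ?_)
  simp; ring

lemma K_mono {K : ℝ} {i : ℕ} {p : ℝ → ℝ} (hb : ∀ y ∈ Ioc (0:ℝ) 1, |p y| ≤ K / y ^ i) {x y : ℝ} (hx : 0 < x) (hxy : x < y) :
    K / y ^ i ≤ K / x ^ i := by
  have hK : 0 ≤ K := by simpa using (abs_nonneg _).trans (hb 1 (by simp))
  gcongr

lemma Nf_cont {α : ℝ} (h0 : 0 < α) (i : ℕ) {p : ℝ → ℝ} (hp : ContinuousOn p (Ioc 0 1)) {K : ℝ}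
    (hb : ∀ y ∈ Ioc (0:ℝ) 1, |p y| ≤ K / y ^ i) : ContinuousOn (Nf α i p) (Ioc 0 1) := by
  intro x hx
  have hx2 : 0 < x / 2 := by linarith [hx.1]
  have hev : ∀ᶠ y in 𝓝[Ioc 0 1] x, x / 2 < y :=
    mem_nhdsWithin_of_mem_nhds (Ioi_mem_nhds (by linarith [hx.1]))
  refine intervalIntegral.continuousWithinAt_of_dominated_interval (μ := volume) (a := 0) (b := 1)
    (bound := fun s => (1 - s) ^ (α - 1) * (K / (x/2) ^ i)) ?_ ?_ ?_ ?_
  · filter_upwards [self_mem_nhdsWithin] with y hy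
    rw [uIoc_of_le zero_le_one]
    exact Nf_meas α i hp hy
  · filter_upwards [self_mem_nhdsWithin, hev] with y hy hy2
    refine ae_of_all _ fun s hs => ?_
    rw [uIoc_of_le zero_le_one] at hs
    refine (Nf_le α i hb hy hs).trans (mul_le_mul_of_nonneg_left ?_ (Real.rpow_nonneg (by linarith [hs.2]) _))
    exact K_mono hb hx2 hy2
  · exact (kint h0 1 0).mul_const _
  · refine ae_of_all _ fun s hs => ?_
    rw [uIoc_of_le zero_le_one] at hs
    have hmem : ∀ y ∈ Ioc (0:ℝ) 1, y * s ∈ Ioc (0:ℝ) 1 := fun y hy =>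
      ⟨mul_pos hy.1 hs.1, mul_le_one₀ hy.2 hs.1.le hs.2⟩
    refine continuousWithinAt_const.mul (continuousWithinAt_const.mul ?_)
    exact ContinuousWithinAt.comp (g := p) (f := fun y => y * s) (t := Ioc 0 1) (hp _ (hmem x hx)) (by fun_prop) hmem

lemma Nf_deriv {α : ℝ} (h0 : 0 < α) (i : ℕ) {p p' : ℝ → ℝ} (hp : ContinuousOn p (Ioc 0 1))
    (hp' : ContinuousOn p' (Ioc 0 1)) {K K' : ℝ}
    (hb : ∀ y ∈ Ioc (0:ℝ) 1, |p y| ≤ K / y ^ i) (hb' : ∀ y ∈ Ioc (0:ℝ) 1, |p' y| ≤ K' / y ^ (i+1))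
    (hd : ∀ y ∈ Ioo (0:ℝ) 1, HasDerivAt p (p' y) y) {x : ℝ} (hx : x ∈ Ioo (0:ℝ) 1) :
    HasDerivAt (Nf α i p) (Nf α (i+1) p' x) x := by
  have hx2 : 0 < x / 2 := by linarith [hx.1]
  have hn : Ioo (x/2) 1 ∈ 𝓝 x := Ioo_mem_nhds (by linarith [hx.1]) hx.2
  have hx' : x ∈ Ioc (0:ℝ) 1 := ⟨hx.1, hx.2.le⟩
  refine (intervalIntegral.hasDerivAt_integral_of_dominated_loc_of_deriv_le (μ := volume) (a := 0) (b := 1)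
    (F := fun x s => (1 - s) ^ (α - 1) * (s ^ i * p (x * s)))
    (F' := fun x s => (1 - s) ^ (α - 1) * (s ^ (i+1) * p' (x * s)))
    (bound := fun s => (1 - s) ^ (α - 1) * (K' / (x/2) ^ (i+1))) hn ?_ ?_ ?_ ?_ ?_ ?_).2
  · filter_upwards [hn] with y hy
    rw [uIoc_of_le zero_le_one]
    exact Nf_meas α i hp ⟨by linarith [hy.1], hy.2.le⟩
  · exact Nf_int h0 i hp hb hx'
  · rw [uIoc_of_le zero_le_one]
    exact Nf_meas α _ hp' hx'
  · refine ae_of_all _ fun s hs y hy => ?_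
    rw [uIoc_of_le zero_le_one] at hs
    refine (Nf_le α _ hb' ⟨by linarith [hy.1], hy.2.le⟩ hs).trans (mul_le_mul_of_nonneg_left ?_ (Real.rpow_nonneg (by linarith [hs.2]) _))
    exact K_mono hb' hx2 hy.1
  · exact (kint h0 1 0).mul_const _
  · refine ae_of_all _ fun s hs y hy => ?_
    rw [uIoc_of_le zero_le_one] at hs
    have hy0 : 0 < y := by linarith [hy.1]
    have hm : y * s ∈ Ioo (0:ℝ) 1 := ⟨mul_pos hy0 hs.1, by nlinarith [hs.2, hs.1, hy.2]⟩
    have h1 : HasDerivAt (fun y => y * s) s y := by simpa using (hasDerivAt_id y).mul_const s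
    have h2 := (HasDerivAt.comp y (hd _ hm) h1).const_mul (s ^ i) |>.const_mul ((1 - s) ^ (α - 1))
    refine h2.congr_deriv ?_
    ring

lemma Nf_derivWithin {α : ℝ} (h0 : 0 < α) (i : ℕ) {p p' : ℝ → ℝ} (hp : ContinuousOn p (Ioc 0 1))
    (hp' : ContinuousOn p' (Ioc 0 1)) {K K' : ℝ}
    (hb : ∀ y ∈ Ioc (0:ℝ) 1, |p y| ≤ K / y ^ i) (hb' : ∀ y ∈ Ioc (0:ℝ) 1, |p' y| ≤ K' / y ^ (i+1))
    (hd : ∀ y ∈ Ioo (0:ℝ) 1, HasDerivAt p (p' y) y) {x : ℝ} (hx : x ∈ Ioc (0:ℝ) 1) :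
    HasDerivWithinAt (Nf α i p) (Nf α (i+1) p' x) (Ioc 0 1) x := by
  have key := fun y hy => Nf_deriv h0 i hp hp' hb hb' hd (x := y) hy
  rcases hx.2.lt_or_eq with h | rfl
  · exact (key x ⟨hx.1, h⟩).hasDerivWithinAt
  · refine (hasDerivWithinAt_Iic_of_tendsto_deriv (s := Ioo 0 1)
      (fun y hy => (key y hy).differentiableAt.differentiableWithinAt)
      ((Nf_cont h0 i hp hb 1 hx).mono Ioo_subset_Ioc_self) (Ioo_mem_nhdsLT zero_lt_one) ?_).mono (fun y hy => hy.2)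
    have h1 := (Nf_cont h0 (i+1) hp' hb' 1 hx).mono Ioo_subset_Ioc_self
    have h2 : Tendsto (Nf α (i+1) p') (𝓝[<] 1) (𝓝 (Nf α (i+1) p' 1)) := by
      rwa [ContinuousWithinAt, nhdsWithin_Ioo_eq_nhdsLT zero_lt_one] at h1
    refine h2.congr' ?_
    filter_upwards [Ioo_mem_nhdsLT zero_lt_one] with y hy
    exact (key y hy).deriv.symm

lemma uIoc01 : UniqueDiffOn ℝ (Ioc (0:ℝ) 1) := uniqueDiffOn_Ioc 0 1

lemma iter_hasDerivAt {q : ℕ} {φ : ℝ → ℝ} (hφq : ContDiffOn ℝ q φ (Ioc 0 1)) {i : ℕ} (hi : i < q)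
    {y : ℝ} (hy : y ∈ Ioo (0:ℝ) 1) :
    HasDerivAt (iteratedDerivWithin i φ (Ioc 0 1)) (iteratedDerivWithin (i+1) φ (Ioc 0 1) y) y := by
  have h := hφq.differentiableOn_iteratedDerivWithin (m := i) (by exact_mod_cast hi) uIoc01 y ⟨hy.1, hy.2.le⟩
  have := h.hasDerivWithinAt
  rw [← iteratedDerivWithin_succ] at this
  exact this.hasDerivAt (Ioc_mem_nhds hy.1 hy.2)

lemma rpow_iter (α : ℝ) (i : ℕ) : ∃ c : ℝ, EqOn (iteratedDerivWithin i (fun x : ℝ => x ^ α) (Ioc 0 1))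
    (fun x => c * x ^ (α - i)) (Ioc 0 1) := by
  induction i with
  | zero => exact ⟨1, fun x _ => by simp⟩
  | succ i ih =>
    obtain ⟨c, hc⟩ := ih
    refine ⟨c * (α - i), fun x hx => ?_⟩
    rw [iteratedDerivWithin_succ, derivWithin_congr hc (hc hx)]
    have := ((Real.hasDerivAt_rpow_const (x := x) (p := α - i) (Or.inl hx.1.ne')).const_mul c).hasDerivWithinAt (s := Ioc 0 1)
    rw [this.derivWithin (uIoc01 x hx)]
    push_cast
    rw [sub_add_eq_sub_sub]; ring

lemma reg {α : ℝ} (h0 : 0 < α) {q : ℕ} {φ : ℝ → ℝ}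
    (hφq : ContDiffOn ℝ q φ (Ioc 0 1)) (K : ℝ)
    (hb : ∀ i : ℕ, i ≤ q → ∀ y ∈ Ioc (0:ℝ) 1, |iteratedDerivWithin i φ (Ioc 0 1) y| ≤ K / y ^ i) :
    ContDiffOn ℝ q (fI α φ) (Ioc 0 1) ∧
    ∀ i : ℕ, i ≤ q → ∃ C : ℝ, ∀ x ∈ Ioc (0:ℝ) 1, |iteratedDerivWithin i (fI α φ) (Ioc 0 1) x| ≤ C * x ^ (α - i) := by
  have hcont : ∀ i ≤ q, ContinuousOn (iteratedDerivWithin i φ (Ioc 0 1)) (Ioc 0 1) := fun i hi =>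
    hφq.continuousOn_iteratedDerivWithin (by exact_mod_cast hi) uIoc01
  have hder : ∀ i < q, ∀ x ∈ Ioc (0:ℝ) 1, HasDerivWithinAt (Nf α i (iteratedDerivWithin i φ (Ioc 0 1)))
      (Nf α (i+1) (iteratedDerivWithin (i+1) φ (Ioc 0 1)) x) (Ioc 0 1) x := fun i hi x hx =>
    Nf_derivWithin h0 i (hcont i hi.le) (hcont (i+1) hi) (hb i hi.le) (hb (i+1) hi)
      (fun y hy => iter_hasDerivAt hφq hi hy) hx
  have hiter : ∀ i ≤ q, EqOn (iteratedDerivWithin i (Nf α 0 φ) (Ioc 0 1))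
      (Nf α i (iteratedDerivWithin i φ (Ioc 0 1))) (Ioc 0 1) := by
    intro i
    induction i with
    | zero => intro _ x _; simp
    | succ i ih =>
      intro hi x hx
      have ih := ih (by omega)
      rw [iteratedDerivWithin_succ, derivWithin_congr ih (ih hx)]
      exact (hder i (by omega) x hx).derivWithin (uIoc01 x hx)
  have hN : ContDiffOn ℝ q (Nf α 0 φ) (Ioc 0 1) := by
    rw [contDiffOn_nat_iff_continuousOn_differentiableOn_deriv uIoc01]
    refine ⟨fun i hi => ?_, fun i hi => ?_⟩
    · exact (Nf_cont h0 i (hcont i hi) (hb i hi)).congr (hiter i hi)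
    · refine DifferentiableOn.congr (fun x hx => (hder i hi x hx).differentiableWithinAt) (hiter i hi.le)
  have hP : ContDiffOn ℝ q (fun x : ℝ => x ^ α) (Ioc 0 1) := fun x hx =>
    (Real.contDiffAt_rpow_const (Or.inl hx.1.ne')).contDiffWithinAt
  have hE : EqOn (fI α φ) (fun x => (1 / Real.Gamma α) * (x ^ α * Nf α 0 φ x)) (Ioc 0 1) := by
    intro x hx
    rw [fI_scaled h0 φ hx.1.le]
    simp only [Nf, pow_zero, one_mul]
    ring
  refine ⟨(contDiffOn_const.mul (hP.mul hN)).congr hE, fun i hi => ?_⟩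
  choose c hc using rpow_iter α
  refine ⟨|1 / Real.Gamma α| * ∑ j ∈ Finset.range (i+1), (i.choose j : ℝ) * |c j| * (K / α), fun x hx => ?_⟩
  have hx0 := hx.1
  rw [iteratedDerivWithin_congr hE hx, iteratedDerivWithin_const_mul_field, abs_mul, mul_assoc]
  refine mul_le_mul_of_nonneg_left ?_ (abs_nonneg _)
  have hm := norm_iteratedFDerivWithin_mul_le hP hN uIoc01 hx (n := i) (by exact_mod_cast hi)
  simp only [norm_iteratedFDerivWithin_eq_norm_iteratedDerivWithin, Real.norm_eq_abs] at hm
  refine hm.trans ?_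
  rw [Finset.sum_mul]
  refine Finset.sum_le_sum fun j hj => ?_
  have hj : j ≤ i := by simpa [Nat.lt_succ_iff] using hj
  rw [hiter (i - j) (by omega) hx, hc j hx]
  have hNb := Nf_bound h0 (i - j) (hb (i - j) (by omega)) hx
  simp only [abs_mul, abs_of_pos (Real.rpow_pos_of_pos hx0 _)]
  calc (i.choose j : ℝ) * (|c j| * x ^ (α - j)) * _ ≤ (i.choose j : ℝ) * (|c j| * x ^ (α - j)) * ((K / α) / x ^ (i - j)) := by gcongr
    _ = _ := by
      have : x ^ (α - i) = x ^ (α - j) / x ^ (i - j) := by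
        rw [← Real.rpow_natCast, ← Real.rpow_sub hx0, Nat.cast_sub hj]; congr 1; ring
      rw [this]; ring

lemma iter_set {f : ℝ → ℝ} (i : ℕ) {x : ℝ} (hx : x ∈ Ioc (0:ℝ) 1) :
    iteratedDerivWithin i f (Icc 0 1) x = iteratedDerivWithin i f (Ioc 0 1) x := by
  unfold iteratedDerivWithin
  rw [iteratedFDerivWithin_congr_set]
  filter_upwards [Ioi_mem_nhds hx.1] with y hy
  exact propext ⟨fun h => ⟨hy, h.2⟩, fun h => ⟨h.1.le, h.2⟩⟩

lemma iter_add {f : ℝ → ℝ} (n j : ℕ) (s : Set ℝ) :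
    iteratedDerivWithin (n + j) f s = iteratedDerivWithin j (iteratedDerivWithin n f s) s := by
  ext x
  simp only [iteratedDerivWithin_eq_iterate]
  rw [add_comm, Function.iterate_add_apply]
  have : (fun g => derivWithin g s)^[n] f = iteratedDerivWithin n f s := by
    ext; rw [iteratedDerivWithin_eq_iterate]
  rw [this]

lemma ctd_add {f : ℝ → ℝ} (n q : ℕ) {s : Set ℝ} (hs : UniqueDiffOn ℝ s) (hf : ContDiffOn ℝ n f s)
    (hq : ContDiffOn ℝ q (iteratedDerivWithin n f s) s) : ContDiffOn ℝ (n + q : ℕ) f s := by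
  rw [contDiffOn_nat_iff_continuousOn_differentiableOn_deriv hs] at *
  refine ⟨fun i hi => ?_, fun i hi => ?_⟩
  · rcases le_total i n with h | h
    · exact hf.1 i h
    · obtain ⟨j, rfl⟩ := Nat.exists_eq_add_of_le h
      rw [iter_add]; exact hq.1 j (by omega)
  · rcases lt_or_ge i n with h | h
    · exact hf.2 i h
    · obtain ⟨j, rfl⟩ := Nat.exists_eq_add_of_le h
      rw [iter_add]; exact hq.2 j (by omega)

theorem stmt7 (m q : ℕ) (hm : 0 < m) (hq : 1 ≤ q)
    (σ : ℝ) (hσ1 : (m:ℝ) - 1 < σ) (hσ2 : σ < m)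
    (r : ℝ → ℝ) (hr : ContDiffOn ℝ (m - 1) r (Set.Icc 0 1))
    (hJ : ContDiffOn ℝ m (Jfun m σ r) (Set.Ioc 0 1))
    (φ : ℝ → ℝ)
    (hφeq : ∀ x ∈ Set.Ioc (0:ℝ) 1,
      φ x = iteratedDerivWithin m (Jfun m σ r) (Set.Icc 0 1) x)
    (hφc : ContinuousOn φ (Set.Icc 0 1))
    (hφq : ContDiffOn ℝ q φ (Set.Ioc 0 1))
    (C₀ : ℝ)
    (hφb : ∀ i : ℕ, 1 ≤ i → i ≤ q → ∀ x ∈ Set.Ioc (0:ℝ) 1,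
      |iteratedDerivWithin i φ (Set.Icc 0 1) x| ≤ C₀ * x ^ (σ - m + 1 - i)) :
    ContDiffOn ℝ (q + m - 1) r (Set.Ioc 0 1) ∧
    ∃ C : ℝ, ∀ x ∈ Set.Ioc (0:ℝ) 1,
      (∀ i : ℕ, i ≤ m - 1 → |iteratedDerivWithin i r (Set.Icc 0 1) x| ≤ C) ∧
      (∀ i : ℕ, m ≤ i → i ≤ q + m - 1 →
        |iteratedDerivWithin i r (Set.Icc 0 1) x| ≤ C * x ^ (σ - i)) := by
  obtain ⟨n, rfl⟩ : ∃ n, m = n + 1 := ⟨m - 1, by omega⟩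
  have e1 : (((n + 1 : ℕ) : WithTop ℕ∞) - 1) = (n : ℕ) := by norm_cast
  have e2 : ((q : WithTop ℕ∞) + ((n + 1 : ℕ) : WithTop ℕ∞) - 1) = ((n + q : ℕ) : WithTop ℕ∞) := by
    rw [show n + q = q + (n + 1) - 1 by omega]; norm_cast
  rw [e1] at hr
  rw [e2]
  clear e1 e2
  have hu : UniqueDiffOn ℝ (Icc (0:ℝ) 1) := uniqueDiffOn_Icc zero_lt_one
  set α : ℝ := σ - n with hα
  push_cast at hσ1 hσ2
  have h0 : 0 < α := by rw [hα]; linarith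
  have h1 : α < 1 := by rw [hα]; linarith
  have h1' : 0 < 1 - α := by linarith
  set v : ℝ → ℝ := fun t => iteratedDerivWithin n r (Icc 0 1) t - iteratedDerivWithin n r (Icc 0 1) 0 with hv
  have hvc : ContinuousOn v (Icc 0 1) := (hr.continuousOn_iteratedDerivWithin le_rfl hu).sub continuousOn_const
  have hJe : EqOn (Jfun (n+1) σ r) (Pn n (fI (1 - α) v)) (Icc 0 1) := by
    have a1 : Jfun (n+1) σ r = fI (1 - α) (wfun (n+1) r) := by
      ext x
      have : ((n+1 : ℕ) : ℝ) - σ = 1 - α := by rw [hα]; push_cast; ring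
      unfold Jfun fI
      rw [this]
    rw [a1]
    exact (fI_congr (w_Pn n hr)).trans (fI_Pn n h1' hvc)
  have hue : EqOn (iteratedDerivWithin n (Jfun (n+1) σ r) (Icc 0 1)) (fI (1 - α) v) (Icc 0 1) := fun x hx => by
    rw [iteratedDerivWithin_congr hJe hx, Pn_deriv n (fI_cont h1' hvc) hx]
  have hvE : EqOn v (fI α φ) (Icc 0 1) := by
    refine abel h0 h1 hvc hφc fun x hx => ?_
    have hx' : x ∈ Ioc (0:ℝ) 1 := ⟨hx.1, hx.2.le⟩
    have := iter_hasDerivAt hJ (i := n) (Nat.lt_succ_self n) hx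
    rw [← iter_set (n+1) hx', ← hφeq x hx'] at this
    refine this.congr_of_eventuallyEq ?_
    filter_upwards [Ioo_mem_nhds hx.1 hx.2] with y hy
    rw [← hue ⟨hy.1.le, hy.2.le⟩, iter_set n ⟨hy.1, hy.2.le⟩]
  obtain ⟨M, hM⟩ := isCompact_Icc.exists_bound_of_continuousOn hφc
  have hM0 : 0 ≤ M := (norm_nonneg _).trans (hM 0 (by simp))
  obtain ⟨hreg, hbd⟩ := reg h0 hφq (M + |C₀|) (by
    intro i hi y hy
    have hy0 := hy.1
    rcases Nat.eq_zero_or_pos i with rfl | hi0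
    · simp only [iteratedDerivWithin_zero, pow_zero, div_one]
      have := hM y ⟨hy.1.le, hy.2⟩
      rw [Real.norm_eq_abs] at this
      linarith [abs_nonneg C₀]
    · rw [← iter_set i hy]
      refine (hφb i hi0 hi y hy).trans ?_
      have e : y ^ (σ - ((n + 1 : ℕ) : ℝ) + 1 - i) = y ^ α / y ^ i := by
        rw [← Real.rpow_natCast, ← Real.rpow_sub hy0]; congr 1; rw [hα]; push_cast; ring
      have : y ^ α ≤ 1 := Real.rpow_le_one hy0.le hy.2 h0.le
      have hp := Real.rpow_pos_of_pos hy0 α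
      rw [e, ← mul_div_assoc]
      gcongr
      nlinarith [le_abs_self C₀, abs_nonneg C₀])
  have hrE : EqOn (iteratedDerivWithin n r (Ioc 0 1)) (fun x => iteratedDerivWithin n r (Icc 0 1) 0 + fI α φ x) (Ioc 0 1) := by
    intro x hx
    simp only
    rw [← iter_set n hx, ← hvE ⟨hx.1.le, hx.2⟩, hv]
    ring
  refine ⟨ctd_add n q uIoc01 (hr.mono Ioc_subset_Icc_self) ((contDiffOn_const.add hreg).congr hrE), ?_⟩
  have hlow : ∀ i, ∃ C, i ≤ n → ∀ x ∈ Ioc (0:ℝ) 1, |iteratedDerivWithin i r (Icc 0 1) x| ≤ C := by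
    intro i
    by_cases hi : i ≤ n
    · obtain ⟨C, hC⟩ := isCompact_Icc.exists_bound_of_continuousOn
        (hr.continuousOn_iteratedDerivWithin (m := i) (by exact_mod_cast hi) hu)
      exact ⟨C, fun _ x hx => hC x ⟨hx.1.le, hx.2⟩⟩
    · exact ⟨0, fun h => absurd h hi⟩
  have hhigh : ∀ i, ∃ C, n + 1 ≤ i → i ≤ n + q → ∀ x ∈ Ioc (0:ℝ) 1, |iteratedDerivWithin i r (Icc 0 1) x| ≤ C * x ^ (σ - i) := by
    intro i
    by_cases hi : n + 1 ≤ i ∧ i ≤ n + q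
    · obtain ⟨j, rfl⟩ := Nat.exists_eq_add_of_le (show n ≤ i by omega)
      obtain ⟨C, hC⟩ := hbd j (by omega)
      refine ⟨C, fun _ _ x hx => ?_⟩
      have := hC x hx
      rw [iter_set _ hx, iter_add, iteratedDerivWithin_congr hrE hx,
        iteratedDerivWithin_const_add (by omega)]
      convert this using 3
      rw [hα]; push_cast; ring
    · exact ⟨0, fun h h' => absurd ⟨h, h'⟩ hi⟩
  choose A hA using hlow
  choose B hB using hhigh
  have hle : ∀ i ≤ n + q, |A i| + |B i| ≤ ∑ j ∈ Finset.range (n + q + 1), (|A j| + |B j|) := fun i hi =>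
    Finset.single_le_sum (f := fun j => |A j| + |B j|) (fun j _ => by positivity) (by simp; omega)
  refine ⟨∑ j ∈ Finset.range (n + q + 1), (|A j| + |B j|), fun x hx => ⟨fun i hi => ?_, fun i hi hi' => ?_⟩⟩
  · have := hle i (by omega)
    linarith [hA i (by omega) x hx, le_abs_self (A i), abs_nonneg (B i)]
  · refine (hB i hi (by omega) x hx).trans ?_
    refine mul_le_mul_of_nonneg_right ?_ (Real.rpow_nonneg hx.1.le _)
    linarith [hle i (by omega), le_abs_self (B i), abs_nonneg (A i)]
end

section
/- Let m be a positive integer and let σ ∈ ℝ satisfy m−1 < σ < m. Let p be a polynomial of degree at most m−1, and let φ : [0,1] → ℝ be continuous on [0,1], twice continuously differentiable on (0,1], with |φ'(s)| ≤ C₀ s^{σ−m} and |φ''(s)| ≤ C₀ s^{σ−m−1} for all 0 < s ≤ 1 and some constant C₀. Define r(x) = p(x) + (1/Γ(σ)) ∫₀ˣ (x-s)^{σ−1} φ(s) ds for 0 ≤ x ≤ 1. Then r is (m+1)-times differentiable on (0,1], with r^{(m+1)}(x) = ( φ(0)/Γ(σ−m) ) x^{σ−m−1} + (1/Γ(σ−m+1))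 · (1/x) ∫₀ˣ (x-s)^{σ−m} [ s φ''(s) + (σ−m+1) φ'(s) ] ds, and there exists a constant C, independent of x, such that |r^{(m+1)}(x)| ≤ C x^{σ−m−1} for all 0 < x ≤ 1. -/
/-- `r(x) = p(x) + (1/Γ(σ)) ∫₀ˣ (x-s)^{σ−1} φ(s) ds`. -/
noncomputable def rfun (σ : ℝ) (p : Polynomial ℝ) (φ : ℝ → ℝ) : ℝ → ℝ :=
  fun x => p.eval x + (1 / Real.Gamma σ) *
    ∫ s in (0:ℝ)..x, (x - s) ^ (σ - 1) * φ s

open Set Filter Topology MeasureTheory intervalIntegral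

noncomputable def TT (a : ℝ) (f : ℝ → ℝ) (x : ℝ) : ℝ :=
  ∫ t in (0:ℝ)..1, (1 - t) ^ (a - 1) * f (x * t)

def Good (b : ℝ) (f : ℝ → ℝ) : Prop :=
  ContinuousOn f (Ioc 0 1) ∧ ∃ C : ℝ, 0 ≤ C ∧ ∀ s ∈ Ioc (0:ℝ) 1, |f s| ≤ C * s ^ b

lemma beta_int {a b : ℝ} (ha : 0 < a) (hb : -1 < b) :
    IntervalIntegrable (fun t : ℝ => (1 - t) ^ (a - 1) * t ^ b) volume 0 1 := by
  have h := (Complex.betaIntegral_convergent (u := ((b + 1 : ℝ) : ℂ)) (v := (a : ℂ))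
    (by simp; linarith) (by simpa using ha)).norm
  refine h.congr_ae ?_
  rw [uIoc_of_le zero_le_one]
  have h1 : ∀ᵐ t : ℝ ∂(volume.restrict (Ioc 0 1)), t ≠ 1 :=
    ae_restrict_of_ae (by simp [ae_iff])
  filter_upwards [h1, ae_restrict_mem measurableSet_Ioc] with t ht1 ht
  have h2 : 0 < 1 - t := sub_pos.2 (lt_of_le_of_ne ht.2 ht1)
  rw [norm_mul]
  have e1 : (1 - (t:ℂ)) = ((1 - t : ℝ) : ℂ) := by push_cast; ring
  rw [e1, Complex.norm_cpow_eq_rpow_re_of_pos ht.1, Complex.norm_cpow_eq_rpow_re_of_pos h2]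
  simp [mul_comm]

lemma mul_mem_S {x t : ℝ} (hx : x ∈ Ioc (0:ℝ) 1) (ht : t ∈ Ioc (0:ℝ) 1) :
    x * t ∈ Ioc (0:ℝ) 1 :=
  ⟨mul_pos hx.1 ht.1, mul_le_one₀ hx.2 ht.1.le ht.2⟩

lemma meas_aux (a : ℝ) {f : ℝ → ℝ} (hf : ContinuousOn f (Ioc 0 1)) {x : ℝ}
    (hx : x ∈ Ioc (0:ℝ) 1) :
    AEStronglyMeasurable (fun t => (1 - t) ^ (a - 1) * f (x * t))
      (volume.restrict (uIoc 0 1)) := by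
  rw [uIoc_of_le zero_le_one]
  refine AEStronglyMeasurable.mul ?_ ?_
  · exact (by fun_prop : Measurable (fun t : ℝ => (1 - t) ^ (a - 1))).aestronglyMeasurable
  · refine ContinuousOn.aestronglyMeasurable ?_ measurableSet_Ioc
    exact hf.comp (by fun_prop) (fun t ht => mul_mem_S hx ht)

lemma bound_aux {a b C : ℝ} (hb0 : b ≤ 0) {f : ℝ → ℝ} (hC : 0 ≤ C)
    (hf : ∀ s ∈ Ioc (0:ℝ) 1, |f s| ≤ C * s ^ b) {c x t : ℝ}
    (hc : 0 < c) (hcx : c ≤ x) (hx : x ∈ Ioc (0:ℝ) 1)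
    (ht : t ∈ Ioc (0:ℝ) 1) :
    ‖(1 - t) ^ (a - 1) * f (x * t)‖ ≤ (C * c ^ b) * ((1 - t) ^ (a - 1) * t ^ b) := by
  rw [norm_mul, Real.norm_eq_abs, Real.norm_eq_abs]
  have h0 : 0 ≤ (1 - t) ^ (a - 1) := Real.rpow_nonneg (by linarith [ht.2]) _
  rw [abs_of_nonneg h0]
  have h1 := hf _ (mul_mem_S hx ht)
  rw [Real.mul_rpow hx.1.le ht.1.le] at h1
  have h2 : x ^ b ≤ c ^ b := Real.rpow_le_rpow_of_nonpos hc hcx hb0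
  have h3 : 0 ≤ t ^ b := Real.rpow_nonneg ht.1.le _
  calc (1 - t) ^ (a - 1) * |f (x * t)| ≤ (1 - t) ^ (a - 1) * (C * (x ^ b * t ^ b)) := by gcongr
    _ ≤ (1 - t) ^ (a - 1) * (C * (c ^ b * t ^ b)) := by gcongr
    _ = _ := by ring

lemma TT_int {a b : ℝ} (ha : 0 < a) (hb : -1 < b) (hb0 : b ≤ 0) {f : ℝ → ℝ} (hf : Good b f)
    {x : ℝ} (hx : x ∈ Ioc (0:ℝ) 1) :
    IntervalIntegrable (fun t => (1 - t) ^ (a - 1) * f (x * t)) volume 0 1 := by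
  obtain ⟨hc, C, hC, hbd⟩ := hf
  refine ((beta_int ha hb).const_mul (C * x ^ b)).mono_fun' (meas_aux a hc hx) ?_
  filter_upwards [ae_restrict_mem measurableSet_uIoc] with t ht
  rw [uIoc_of_le zero_le_one] at ht
  exact bound_aux hb0 hC hbd hx.1 le_rfl hx ht

lemma TT_bound {a b : ℝ} (ha : 0 < a) (hb : -1 < b) (hb0 : b ≤ 0) {f : ℝ → ℝ} (hf : Good b f) :
    ∃ K : ℝ, 0 ≤ K ∧ ∀ x ∈ Ioc (0:ℝ) 1, |TT a f x| ≤ K * x ^ b := by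
  obtain ⟨hc, C, hC, hbd⟩ := hf
  refine ⟨C * ∫ t in (0:ℝ)..1, (1 - t) ^ (a - 1) * t ^ b, ?_, fun x hx => ?_⟩
  · refine mul_nonneg hC (integral_nonneg zero_le_one fun t ht => ?_)
    exact mul_nonneg (Real.rpow_nonneg (by linarith [ht.2]) _) (Real.rpow_nonneg ht.1 _)
  · have := norm_integral_le_of_norm_le zero_le_one
      (f := fun t => (1 - t) ^ (a - 1) * f (x * t)) (μ := volume)
      (Eventually.of_forall fun t ht => bound_aux hb0 hC hbd hx.1 le_rfl hx ht)
      ((beta_int ha hb).const_mul (C * x ^ b))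
    rw [intervalIntegral.integral_const_mul] at this
    unfold TT
    rw [← Real.norm_eq_abs]
    refine this.trans (le_of_eq (by ring))

lemma TT_cont {a b : ℝ} (ha : 0 < a) (hb : -1 < b) (hb0 : b ≤ 0) {f : ℝ → ℝ} (hf : Good b f) :
    ContinuousOn (TT a f) (Ioc 0 1) := by
  obtain ⟨hc, C, hC, hbd⟩ := hf
  intro x hx
  have hx2 : 0 < x / 2 := half_pos hx.1
  refine continuousWithinAt_of_dominated_interval
    (bound := fun t => (C * (x/2) ^ b) * ((1 - t) ^ (a - 1) * t ^ b)) ?_ ?_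
    ((beta_int ha hb).const_mul _) ?_
  · filter_upwards [self_mem_nhdsWithin] with y hy using meas_aux a hc hy
  · filter_upwards [self_mem_nhdsWithin,
      mem_nhdsWithin_of_mem_nhds (Ioi_mem_nhds (half_lt_self hx.1))] with y hy hy2
    refine Eventually.of_forall fun t ht => ?_
    rw [uIoc_of_le zero_le_one] at ht
    exact bound_aux hb0 hC hbd hx2 (le_of_lt hy2) hy ht
  · refine Eventually.of_forall fun t ht => ?_
    rw [uIoc_of_le zero_le_one] at ht
    refine ContinuousWithinAt.mul continuousWithinAt_const ?_
    exact (hc _ (mul_mem_S hx ht)).comp (t := Ioc 0 1) (f := fun y => y * t)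
      (by fun_prop) (fun y hy => mul_mem_S hy ht)

/-- class of functions -/
structure Cls (b : ℝ) (f f' : ℝ → ℝ) : Prop where
  cont : ContinuousOn f (Icc 0 1)
  deriv : ∀ s ∈ Ioc (0:ℝ) 1, HasDerivWithinAt f (f' s) (Ioc 0 1) s
  good : Good b f'

lemma Good.of_cont {b : ℝ} (hb0 : b ≤ 0) {f : ℝ → ℝ} (hf : ContinuousOn f (Icc 0 1)) :
    Good b f := by
  refine ⟨hf.mono Ioc_subset_Icc_self, ?_⟩
  obtain ⟨C, hC⟩ := isCompact_Icc.exists_bound_of_continuousOn hf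
  have hC0 : 0 ≤ C := (norm_nonneg _).trans (hC 0 (by simp))
  refine ⟨C, hC0, fun s hs => (hC s (Ioc_subset_Icc_self hs)).trans ?_⟩
  have := Real.one_le_rpow_of_pos_of_le_one_of_nonpos hs.1 hs.2 hb0
  nlinarith

lemma Good.mul_id {b : ℝ} {f : ℝ → ℝ} (hf : Good b f) : Good b (fun s => s * f s) := by
  obtain ⟨hc, C, hC, h⟩ := hf
  refine ⟨continuousOn_id.mul hc, C, hC, fun s hs => ?_⟩
  rw [abs_mul, abs_of_pos hs.1]
  exact (mul_le_of_le_one_left (abs_nonneg _) hs.2).trans (h s hs)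

lemma Good.add {b : ℝ} {f g : ℝ → ℝ} (hf : Good b f) (hg : Good b g) :
    Good b (fun s => f s + g s) := by
  obtain ⟨hc, C, hC, h⟩ := hf
  obtain ⟨hc', C', hC', h'⟩ := hg
  refine ⟨hc.add hc', C + C', by positivity, fun s hs => ?_⟩
  have := h s hs
  have := h' s hs
  have := abs_add_le (f s) (g s)
  linarith

lemma Good.smul {b : ℝ} {f : ℝ → ℝ} (hf : Good b f) (c : ℝ) :
    Good b (fun s => c * f s) := by
  obtain ⟨hc, C, hC, h⟩ := hf
  refine ⟨continuousOn_const.mul hc, |c| * C, by positivity, fun s hs => ?_⟩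
  rw [abs_mul, mul_assoc]
  exact mul_le_mul_of_nonneg_left (h s hs) (abs_nonneg _)

lemma Cls.hasDerivAt {b : ℝ} {f f' : ℝ → ℝ} (h : Cls b f f') {s : ℝ} (hs : s ∈ Ioo (0:ℝ) 1) :
    HasDerivAt f (f' s) s :=
  (h.deriv s ⟨hs.1, hs.2.le⟩).hasDerivAt (Ioc_mem_nhds hs.1 hs.2)

lemma TT_x {a x : ℝ} (f : ℝ → ℝ) :
    TT a (fun s => s * f s) x = x * ∫ t in (0:ℝ)..1, (1 - t) ^ (a - 1) * (t * f (x * t)) := by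
  unfold TT
  rw [← intervalIntegral.integral_const_mul]
  congr 1; ext t; ring

lemma TT_deriv_int {a b : ℝ} (ha : 0 < a) (hb : -1 < b) (hb0 : b ≤ 0) {f f' : ℝ → ℝ}
    (hf : Cls b f f') {x : ℝ} (hx : x ∈ Ioo (0:ℝ) 1) :
    HasDerivAt (TT a f) (x⁻¹ * TT a (fun s => s * f' s) x) x := by
  have hxS : x ∈ Ioc (0:ℝ) 1 := ⟨hx.1, hx.2.le⟩
  rw [TT_x, inv_mul_cancel_left₀ hx.1.ne']
  have hfg : Good b f := Good.of_cont hb0 hf.cont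
  obtain ⟨hc, C, hC, hbd⟩ := hf.good
  have hx2 : 0 < x / 2 := half_pos hx.1
  refine (hasDerivAt_integral_of_dominated_loc_of_deriv_le (μ := volume)
    (s := Ioo (x/2) 1) (F := fun y t => (1 - t) ^ (a - 1) * f (y * t))
    (F' := fun y t => (1 - t) ^ (a - 1) * (t * f' (y * t)))
    (bound := fun t => (C * (x/2) ^ b) * ((1 - t) ^ (a - 1) * t ^ b))
    (Ioo_mem_nhds (half_lt_self hx.1) hx.2) ?_ (TT_int ha hb hb0 hfg hxS) ?_ ?_
    ((beta_int ha hb).const_mul _) ?_).2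
  · filter_upwards [Ioo_mem_nhds hx.1 hx.2] with y hy using meas_aux a hfg.1 ⟨hy.1, hy.2.le⟩
  · have := ((measurable_id (α := ℝ)).aestronglyMeasurable
      (μ := volume.restrict (uIoc (0:ℝ) 1))).mul (meas_aux a hc hxS)
    refine this.congr (Eventually.of_forall fun t => ?_)
    simp; ring
  · refine Eventually.of_forall fun t ht y hy => ?_
    rw [uIoc_of_le zero_le_one] at ht
    have := bound_aux (a := a) hb0 hC hbd hx2 hy.1.le ⟨hx2.trans hy.1, hy.2.le⟩ ht
    refine le_trans ?_ this
    rw [norm_mul, norm_mul, norm_mul]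
    refine mul_le_mul_of_nonneg_left ?_ (norm_nonneg _)
    refine mul_le_of_le_one_left (norm_nonneg _) ?_
    rw [Real.norm_eq_abs, abs_of_pos ht.1]; exact ht.2
  · refine Eventually.of_forall fun t ht y hy => ?_
    rw [uIoc_of_le zero_le_one] at ht
    refine HasDerivAt.const_mul _ ?_
    have hy0 : 0 < y := hx2.trans hy.1
    have h1 : y * t ∈ Ioo (0:ℝ) 1 :=
      ⟨mul_pos hy0 ht.1, lt_of_le_of_lt (mul_le_of_le_one_right hy0.le ht.2) hy.2⟩
    have := (hf.hasDerivAt h1).comp y ((hasDerivAt_id y).mul_const t)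
    exact this.congr_deriv (by ring)

lemma TT_deriv {a b : ℝ} (ha : 0 < a) (hb : -1 < b) (hb0 : b ≤ 0) {f f' : ℝ → ℝ}
    (hf : Cls b f f') {x : ℝ} (hx : x ∈ Ioc (0:ℝ) 1) :
    HasDerivWithinAt (TT a f) (x⁻¹ * TT a (fun s => s * f' s) x) (Ioc 0 1) x := by
  rcases lt_or_eq_of_le hx.2 with h | rfl
  · exact (TT_deriv_int ha hb hb0 hf ⟨hx.1, h⟩).hasDerivWithinAt
  · have hS : Ioo (0:ℝ) 1 ∈ 𝓝[<] 1 := Ioo_mem_nhdsLT zero_lt_one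
    refine (hasDerivWithinAt_Iic_of_tendsto_deriv (s := Ioo 0 1) ?_ ?_ hS ?_).mono
      (fun y hy => hy.2)
    · exact fun y hy => (TT_deriv_int ha hb hb0 hf hy).differentiableAt.differentiableWithinAt
    · exact ((TT_cont ha hb hb0 (Good.of_cont hb0 hf.cont)) 1 hx).mono Ioo_subset_Ioc_self
    · have h1 : ContinuousWithinAt (fun x => x⁻¹ * TT a (fun s => s * f' s) x) (Ioc 0 1) 1 :=
        ContinuousWithinAt.mul (by fun_prop (disch := norm_num))
          (TT_cont ha hb hb0 hf.good.mul_id 1 hx)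
      have h2 : Tendsto (fun x => x⁻¹ * TT a (fun s => s * f' s) x) (𝓝[<] 1)
          (𝓝 ((1:ℝ)⁻¹ * TT a (fun s => s * f' s) 1)) := by
        refine h1.mono_left ?_
        rw [← nhdsWithin_Ioo_eq_nhdsLT zero_lt_one]
        exact nhdsWithin_mono _ Ioo_subset_Ioc_self
      refine h2.congr' ?_
      filter_upwards [hS] with y hy using (TT_deriv_int ha hb hb0 hf hy).deriv.symm

lemma TT_ibp {a b : ℝ} (ha : 0 < a) (hb : -1 < b) (hb0 : b ≤ 0) {f f' : ℝ → ℝ}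
    (hf : Cls b f f') {x : ℝ} (hx : x ∈ Ioc (0:ℝ) 1) :
    x * TT (a + 1) f' x = - f 0 + a * TT a f x := by
  have key := integral_mul_deriv_eq_deriv_mul_of_hasDerivAt (a := 0) (b := 1)
    (u := fun t : ℝ => (1 - t) ^ a) (u' := fun t => -(a * (1 - t) ^ (a - 1)))
    (v := fun t => f (x * t)) (v' := fun t => x * f' (x * t)) ?_ ?_ ?_ ?_ ?_ ?_
  · simp only [sub_self, sub_zero, mul_zero, Real.one_rpow, Real.zero_rpow ha.ne'] at key
    unfold TT
    rw [← intervalIntegral.integral_const_mul, ← intervalIntegral.integral_const_mul]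
    rw [add_sub_cancel_right]
    have e1 : (fun t : ℝ => x * ((1 - t) ^ a * f' (x * t)))
      = fun t => (1 - t) ^ a * (x * f' (x * t)) := by ext t; ring
    rw [e1, key, zero_mul, one_mul, zero_sub, sub_eq_add_neg,
      ← intervalIntegral.integral_neg]
    congr 2; ext t; ring
  · exact ContinuousOn.rpow_const (by fun_prop) (fun t ht => Or.inr ha.le)
  · rw [uIcc_of_le zero_le_one]
    refine hf.cont.comp (by fun_prop) (fun t ht => ⟨mul_nonneg hx.1.le ht.1, ?_⟩)
    exact mul_le_one₀ hx.2 ht.1 ht.2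
  · intro t ht
    simp only [zero_le_one, inf_of_le_left, sup_of_le_right] at ht
    have h1 : (1 - t) ≠ 0 := by linarith [ht.2]
    have := ((hasDerivAt_id t).const_sub 1).rpow_const (p := a) (Or.inl h1)
    exact this.congr_deriv (by simp)
  · intro t ht
    simp only [zero_le_one, inf_of_le_left, sup_of_le_right] at ht
    have h1 : x * t ∈ Ioo (0:ℝ) 1 :=
      ⟨mul_pos hx.1 ht.1, lt_of_le_of_lt (mul_le_of_le_one_left ht.1.le hx.2) ht.2⟩
    have := (hf.hasDerivAt h1).comp t ((hasDerivAt_id t).const_mul x)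
    exact this.congr_deriv (by ring)
  · have := (beta_int ha (by norm_num : (-1:ℝ) < 0)).const_mul (-a)
    convert this using 2
    simp
  · have := (TT_int one_pos hb hb0 hf.good hx).const_mul x
    convert this using 2
    simp

lemma TT_add {a b : ℝ} (ha : 0 < a) (hb : -1 < b) (hb0 : b ≤ 0) {f g : ℝ → ℝ}
    (hf : Good b f) (hg : Good b g) {x : ℝ} (hx : x ∈ Ioc (0:ℝ) 1) :
    TT a (fun s => f s + g s) x = TT a f x + TT a g x := by
  unfold TT
  rw [← intervalIntegral.integral_add (TT_int ha hb hb0 hf hx) (TT_int ha hb hb0 hg hx)]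
  congr 1; ext t; ring

lemma TT_smul {a : ℝ} {f : ℝ → ℝ} (c : ℝ) {x : ℝ} :
    TT a (fun s => c * f s) x = c * TT a f x := by
  unfold TT
  rw [← intervalIntegral.integral_const_mul]
  congr 1; ext t; ring

/-- `(1-t)^a = (1-t)^(a-1) - t (1-t)^(a-1)`. -/
lemma TT_succ {a b : ℝ} (ha : 0 < a) (hb : -1 < b) (hb0 : b ≤ 0) {f : ℝ → ℝ}
    (hf : Good b f) {x : ℝ} (hx : x ∈ Ioc (0:ℝ) 1) :
    x * TT (a + 1) f x = x * TT a f x - TT a (fun s => s * f s) x := by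
  unfold TT
  rw [← intervalIntegral.integral_const_mul, ← intervalIntegral.integral_const_mul,
    ← intervalIntegral.integral_sub ((TT_int ha hb hb0 hf hx).const_mul x)
      (TT_int ha hb hb0 hf.mul_id hx)]
  refine intervalIntegral.integral_congr_ae ?_
  have h1 : ∀ᵐ t : ℝ, t ≠ 1 := by simp [ae_iff]
  filter_upwards [h1] with t ht1 ht
  rw [uIoc_of_le zero_le_one] at ht
  have h2 : 0 < 1 - t := sub_pos.2 (lt_of_le_of_ne ht.2 ht1)
  have : (1 - t) ^ (a + 1 - 1) = (1 - t) ^ (a - 1) * (1 - t) := by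
    rw [← Real.rpow_add_one h2.ne']; congr 1; ring
  rw [this]; ring

lemma subst_lem (a : ℝ) (f : ℝ → ℝ) {x : ℝ} (hx : 0 < x) :
    ∫ s in (0:ℝ)..x, (x - s) ^ (a - 1) * f s = x ^ a * TT a f x := by
  have h := integral_comp_mul_left (a := 0) (b := 1) (c := x)
    (fun s => (x - s) ^ (a - 1) * f s) hx.ne'
  rw [mul_zero, mul_one, smul_eq_mul] at h
  have h2 : ∫ s in (0:ℝ)..x, (x - s) ^ (a - 1) * f s =
    x * ∫ t in (0:ℝ)..1, (x - x * t) ^ (a - 1) * f (x * t) := by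
    rw [h, mul_inv_cancel_left₀ hx.ne']
  rw [h2]
  unfold TT
  rw [← intervalIntegral.integral_const_mul, ← intervalIntegral.integral_const_mul]
  refine intervalIntegral.integral_congr fun t ht => ?_
  rw [uIcc_of_le zero_le_one] at ht
  have h3 : x - x * t = x * (1 - t) := by ring
  have h4 : x ^ a = x ^ (a - 1) * x := by
    rw [← Real.rpow_add_one hx.ne']; congr 1; ring
  beta_reduce
  rw [h3, h4, Real.mul_rpow hx.le (by linarith [ht.2])]
  ring

lemma powTT_deriv {a b : ℝ} (ha : 0 < a) (hb : -1 < b) (hb0 : b ≤ 0) {f f' : ℝ → ℝ}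
    (hf : Cls b f f') (c : ℝ) {x : ℝ} (hx : x ∈ Ioc (0:ℝ) 1) :
    HasDerivWithinAt (fun x => x ^ c * TT a f x)
      (x ^ (c - 1) * (c * TT a f x + TT a (fun s => s * f' s) x)) (Ioc 0 1) x := by
  have h := ((Real.hasDerivAt_rpow_const (p := c) (Or.inl hx.1.ne')).hasDerivWithinAt
    (s := Ioc 0 1)).mul (TT_deriv ha hb hb0 hf hx)
  refine h.congr_deriv ?_
  have h4 : x ^ c = x ^ (c - 1) * x := by
    rw [← Real.rpow_add_one hx.1.ne']; congr 1; ring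
  rw [h4]
  have := hx.1.ne'
  field_simp

lemma stepA {a b : ℝ} (ha : 0 < a) (hb : -1 < b) (hb0 : b ≤ 0) {f f' : ℝ → ℝ}
    (hf : Cls b f f') {x : ℝ} (hx : x ∈ Ioc (0:ℝ) 1) :
    HasDerivWithinAt (fun x => 1 / Real.Gamma (a + 1) * (x ^ (a + 1) * TT (a + 1) f x))
      (1 / Real.Gamma a * (x ^ a * TT a f x)) (Ioc 0 1) x := by
  have ha1 : 0 < a + 1 := by linarith
  have h := (powTT_deriv ha1 hb hb0 hf (a + 1) hx).const_mul (1 / Real.Gamma (a + 1))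
  refine h.congr_deriv ?_
  have e1 := TT_succ ha1 hb hb0 hf.good hx
  have e2 := TT_ibp ha hb hb0 hf hx
  have e3 := TT_ibp ha1 hb hb0 hf hx
  have e4 : (a + 1) * TT (a + 1) f x + TT (a + 1) (fun s => s * f' s) x = a * TT a f x := by
    linarith
  have hG := (Real.Gamma_pos_of_pos ha).ne'
  rw [e4, add_sub_cancel_right, Real.Gamma_add_one ha.ne']
  have := ha.ne'
  field_simp

lemma seq_lem {S : Set ℝ} (hS : UniqueDiffOn ℝ S) (n : ℕ) (g : ℕ → ℝ → ℝ) (f : ℝ → ℝ)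
    (h0 : EqOn f (g 0) S)
    (hd : ∀ k < n, ∀ x ∈ S, HasDerivWithinAt (g k) (g (k + 1) x) S x)
    (hc : ContinuousOn (g n) S) :
    ContDiffOn ℝ n f S ∧ ∀ x ∈ S, iteratedDerivWithin n f S x = g n x := by
  have key : ∀ k ≤ n, EqOn (iteratedDerivWithin k f S) (g k) S := by
    intro k
    induction k with
    | zero => intro _ x hx; rw [iteratedDerivWithin_zero]; exact h0 hx
    | succ k ih =>
      intro hk x hx
      rw [iteratedDerivWithin_succ, derivWithin_congr (ih (by omega)) (ih (by omega) hx)]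
      exact (hd k (by omega) x hx).derivWithin (hS x hx)
  refine ⟨?_, key n le_rfl⟩
  have hdiff : ∀ k < n, DifferentiableOn ℝ (iteratedDerivWithin k f S) S := fun k hk x hx =>
    ((hd k hk x hx).differentiableWithinAt).congr (fun y hy => key k hk.le hy) (key k hk.le hx)
  refine contDiffOn_of_continuousOn_differentiableOn_deriv (n := (n : ℕ∞)) ?_ ?_
  · intro k hk
    rcases lt_or_eq_of_le (show k ≤ n by exact_mod_cast hk) with h | rfl
    · exact (hdiff k h).continuousOn
    · exact hc.congr (key k le_rfl)
  · intro k hk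
    exact hdiff k (by exact_mod_cast hk)

lemma set_ev {x : ℝ} (hx : x ∈ Ioc (0:ℝ) 1) : (Icc (0:ℝ) 1) =ᶠ[𝓝 x] (Ioc (0:ℝ) 1) := by
  filter_upwards [Ioi_mem_nhds hx.1] with y hy
  have hy : 0 < y := hy
  refine propext ⟨fun h => ⟨hy, h.2⟩, fun h => ⟨hy.le, h.2⟩⟩

theorem main_aux (m : ℕ) (hm : 0 < m) (σ : ℝ) (hσ1 : (m:ℝ) - 1 < σ) (hσ2 : σ < m)
    (p : Polynomial ℝ) (hp : p.degree ≤ (m - 1 : ℕ))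
    (φ φ' φ'' : ℝ → ℝ) (hc : Cls (σ - m) φ φ')
    (hd2 : ∀ s ∈ Ioc (0:ℝ) 1, HasDerivWithinAt φ' (φ'' s) (Ioc 0 1) s)
    (hc2 : ContinuousOn φ'' (Ioc 0 1)) (C₁ : ℝ)
    (hb2 : ∀ s ∈ Ioc (0:ℝ) 1, |φ'' s| ≤ C₁ * s ^ (σ - m - 1)) :
    (ContDiffOn ℝ ((m + 1 : ℕ)) (rfun σ p φ) (Ioc 0 1) ∧
    (∀ x ∈ Ioc (0:ℝ) 1, iteratedDerivWithin (m + 1) (rfun σ p φ) (Ioc 0 1) x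
        = (φ 0 / Real.Gamma (σ - m)) * x ^ (σ - m - 1)
          + (1 / Real.Gamma (σ - m + 1)) * (1 / x) *
              ∫ s in (0:ℝ)..x, (x - s) ^ (σ - m) * (s * φ'' s + (σ - m + 1) * φ' s))) ∧
    ∃ C : ℝ, ∀ x ∈ Ioc (0:ℝ) 1,
      |(φ 0 / Real.Gamma (σ - m)) * x ^ (σ - m - 1)
          + (1 / Real.Gamma (σ - m + 1)) * (1 / x) *
              ∫ s in (0:ℝ)..x, (x - s) ^ (σ - m) * (s * φ'' s + (σ - m + 1) * φ' s)|
          ≤ C * x ^ (σ - m - 1) := by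
  obtain ⟨b, hbdef⟩ : ∃ b, b = σ - m := ⟨_, rfl⟩
  rw [← hbdef] at hc hb2 ⊢
  have hb : -1 < b := by linarith
  have hbn : b < 0 := by linarith
  have hb0 : b ≤ 0 := hbn.le
  have hα : 0 < b + 1 := by linarith
  have hgφ : Good b φ := Good.of_cont hb0 hc.cont
  have hC₁ : 0 ≤ C₁ := by
    have := (abs_nonneg _).trans (hb2 1 (by simp))
    simpa using this
  -- s φ''
  have hg2 : Good b (fun s => s * φ'' s) := by
    refine ⟨continuousOn_id.mul hc2, C₁, hC₁, fun s hs => ?_⟩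
    have h4 : s ^ b = s ^ (b - 1) * s := by
      rw [← Real.rpow_add_one hs.1.ne']; congr 1; ring
    rw [abs_mul, abs_of_pos hs.1, h4]
    nlinarith [hb2 s hs, hs.1]
  set χ : ℝ → ℝ := fun s => s * φ'' s + (b + 1) * φ' s with hχ
  have hgχ : Good b χ := hg2.add (hc.good.smul (b + 1))
  -- s φ' continuous on [0,1]
  have hsc : ContinuousOn (fun s => s * φ' s) (Icc 0 1) := by
    intro s hs
    rcases eq_or_lt_of_le hs.1 with h | h
    · subst h
      obtain ⟨_, C, hC, hbd⟩ := hc.good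
      rw [ContinuousWithinAt, zero_mul]
      have hz : Tendsto (fun s : ℝ => C * s ^ (b + 1)) (𝓝[Icc 0 1] 0) (𝓝 0) := by
        have : ContinuousAt (fun s : ℝ => C * s ^ (b + 1)) 0 :=
          continuousAt_const.mul (Real.continuousAt_rpow_const _ _ (Or.inr hα.le))
        have h2 := this.continuousWithinAt (s := Icc 0 1)
        rw [ContinuousWithinAt, Real.zero_rpow hα.ne', mul_zero] at h2
        exact h2
      refine squeeze_zero_norm' ?_ hz
      filter_upwards [self_mem_nhdsWithin] with t ht
      rcases eq_or_lt_of_le ht.1 with h' | h'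
      · rw [← h']; simp [Real.zero_rpow hα.ne']
      · rw [norm_mul, Real.norm_eq_abs, Real.norm_eq_abs, abs_of_pos h', Real.rpow_add_one h'.ne']
        nlinarith [hbd t ⟨h', ht.2⟩]
    · have h1 : ContinuousWithinAt (fun s => s * φ' s) (Ioc 0 1) s :=
        (continuousOn_id.mul hc.good.1) s ⟨h, hs.2⟩
      exact h1.congr_set (set_ev ⟨h, hs.2⟩).symm
  -- ω = bφ + sφ', ψ = (b+1) φ + s φ'
  have hsd : ∀ s ∈ Ioc (0:ℝ) 1, HasDerivWithinAt (fun s => s * φ' s) (φ' s + s * φ'' s)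
      (Ioc 0 1) s := fun s hs => by
    have := (hasDerivWithinAt_id s (Ioc 0 1)).mul (hd2 s hs)
    exact this.congr_deriv (by simp)
  have hω : Cls b (fun s => b * φ s + s * φ' s) χ := by
    refine ⟨(continuousOn_const.mul hc.cont).add hsc, fun s hs => ?_, hgχ⟩
    exact (((hc.deriv s hs).const_mul b).add (hsd s hs)).congr_deriv (by rw [hχ]; ring)
  set ψ : ℝ → ℝ := fun s => (b + 1) * φ s + s * φ' s with hψ
  have hψC : Cls b ψ (fun s => χ s + φ' s) := by
    refine ⟨(continuousOn_const.mul hc.cont).add hsc, fun s hs => ?_, hgχ.add hc.good⟩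
    exact (((hc.deriv s hs).const_mul (b + 1)).add (hsd s hs)).congr_deriv (by
      simp only [hχ]; ring)
  have hint : ∀ x ∈ Ioc (0:ℝ) 1, ∫ s in (0:ℝ)..x, (x - s) ^ b * χ s
      = x ^ (b + 1) * TT (b + 1) χ x := fun x hx => by
    have := subst_lem (b + 1) χ hx.1
    rwa [add_sub_cancel_right] at this
  have hTψ : ∀ x ∈ Ioc (0:ℝ) 1, TT (b + 1) ψ x
      = (b + 1) * TT (b + 1) φ x + TT (b + 1) (fun s => s * φ' s) x := fun x hx => by
    rw [hψ, TT_add hα hb hb0 (hgφ.smul _) hc.good.mul_id hx, TT_smul]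
  have hpnat : p.natDegree < m := by
    have := Polynomial.natDegree_le_of_degree_le hp
    omega
  refine ⟨?_, ?_⟩
  · let g : ℕ → ℝ → ℝ := fun k x =>
      if k < m then (Polynomial.derivative^[k] p).eval x
        + 1 / Real.Gamma (σ - k) * (x ^ (σ - k) * TT (σ - k) φ x)
      else if k = m then 1 / Real.Gamma (b + 1) * (x ^ b * TT (b + 1) ψ x)
      else (φ 0 / Real.Gamma b) * x ^ (b - 1)
          + (1 / Real.Gamma (b + 1)) * (1 / x) * ∫ s in (0:ℝ)..x, (x - s) ^ b * χ s
    have hgm1 : g (m + 1) = fun x => (φ 0 / Real.Gamma b) * x ^ (b - 1)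
          + (1 / Real.Gamma (b + 1)) * (1 / x) * ∫ s in (0:ℝ)..x, (x - s) ^ b * χ s := by
      ext x; simp [g]
    have hgm : g m = fun x => 1 / Real.Gamma (b + 1) * (x ^ b * TT (b + 1) ψ x) := by
      ext x; simp [g]
    have hglt : ∀ k < m, g k = fun x => (Polynomial.derivative^[k] p).eval x
        + 1 / Real.Gamma (σ - k) * (x ^ (σ - k) * TT (σ - k) φ x) := by
      intro k hk; ext x; simp [g, hk]
    have := seq_lem (uniqueDiffOn_Ioc 0 1) (m + 1) g (rfun σ p φ) ?_ ?_ ?_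
    · refine ⟨this.1, fun x hx => ?_⟩
      rw [this.2 x hx, hgm1]
    · intro x hx
      rw [hglt 0 hm]
      simp only [rfun, subst_lem σ φ hx.1, Function.iterate_zero, id, Nat.cast_zero, sub_zero]
    · intro k hk x hx
      rcases lt_or_eq_of_le (Nat.lt_succ_iff.1 hk) with hkm | rfl
      · rw [hglt k hkm]
        have hpoly : HasDerivWithinAt (fun x => (Polynomial.derivative^[k] p).eval x)
            ((Polynomial.derivative^[k+1] p).eval x) (Ioc 0 1) x := by
          rw [Function.iterate_succ_apply']
          exact (Polynomial.hasDerivAt _ x).hasDerivWithinAt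
        by_cases hk1 : k + 1 < m
        · rw [hglt _ hk1]
          have hk2 : (k:ℝ) + 1 + 1 ≤ m := by exact_mod_cast hk1
          have ha : 0 < σ - ((k + 1 : ℕ) : ℝ) := by push_cast; linarith
          have h := stepA ha hb hb0 hc hx
          have e : σ - ((k + 1 : ℕ) : ℝ) + 1 = σ - k := by push_cast; ring
          rw [e] at h
          exact hpoly.add h
        · have hk2 : k + 1 = m := by omega
          have hk3 : (k:ℝ) + 1 = m := by exact_mod_cast hk2
          have e : σ - (k:ℝ) = b + 1 := by rw [hbdef]; linarith
          rw [hk2, hgm, e]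
          have h := (powTT_deriv hα hb hb0 hc (b + 1) hx).const_mul (1 / Real.Gamma (b + 1))
          refine (hpoly.add h).congr_deriv ?_
          rw [hk2, Polynomial.iterate_derivative_eq_zero hpnat, ← hTψ x hx]
          simp
      · rw [hgm, hgm1]
        beta_reduce
        have h := (powTT_deriv hα hb hb0 hψC b hx).const_mul (1 / Real.Gamma (b + 1))
        refine h.congr_deriv ?_
        rw [hint x hx]
        have hx0 := hx.1.ne'
        have hG : Real.Gamma b ≠ 0 := by
          intro h0
          have := Real.Gamma_add_one hbn.ne
          rw [h0, mul_zero] at this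
          exact (Real.Gamma_pos_of_pos hα).ne' this
        have h4 : x ^ (b + 1) = x ^ (b - 1) * x * x := by
          rw [← Real.rpow_add_one hx0, ← Real.rpow_add_one hx0]; congr 1; ring
        have e1 := TT_ibp hα hb hb0 hω hx
        have e2 := TT_succ hα hb hb0 hgχ hx
        have e3 : TT (b + 1) (fun s => s * (χ s + φ' s)) x =
            TT (b + 1) (fun s => s * χ s) x + TT (b + 1) (fun s => s * φ' s) x := by
          rw [← TT_add hα hb hb0 hgχ.mul_id hc.good.mul_id hx]
          congr 1; ext s; ring
        have e4 : TT (b + 1) (fun s => b * φ s + s * φ' s) x =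
            b * TT (b + 1) φ x + TT (b + 1) (fun s => s * φ' s) x := by
          rw [TT_add hα hb hb0 (hgφ.smul _) hc.good.mul_id hx, TT_smul]
        have e5 := hTψ x hx
        have e6 : b * TT (b + 1) ψ x + TT (b + 1) (fun s => s * (χ s + φ' s)) x
            = b * φ 0 + x * TT (b + 1) χ x := by
          simp only [zero_mul, add_zero] at e1
          rw [e4] at e1
          rw [e3, e5]
          linear_combination e2 - e1
        rw [e6, Real.Gamma_add_one hbn.ne, h4]
        have := hbn.ne
        field_simp
    · rw [hgm1]
      have hcc : ContinuousOn (fun x => (φ 0 / Real.Gamma b) * x ^ (b - 1)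
          + (1 / Real.Gamma (b + 1)) * (1 / x) * (x ^ (b + 1) * TT (b + 1) χ x)) (Ioc 0 1) := by
        have hr : ∀ c : ℝ, ContinuousOn (fun x : ℝ => x ^ c) (Ioc 0 1) := fun c =>
          continuousOn_id.rpow_const (fun x hx => Or.inl hx.1.ne')
        refine (continuousOn_const.mul (hr _)).add ((continuousOn_const.mul ?_).mul
          ((hr _).mul (TT_cont hα hb hb0 hgχ)))
        exact continuousOn_const.div continuousOn_id (fun x hx => hx.1.ne')
      refine hcc.congr fun x hx => ?_
      beta_reduce
      rw [hint x hx]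
  · obtain ⟨K, hK, hKb⟩ := TT_bound hα hb hb0 hgχ
    refine ⟨|φ 0 / Real.Gamma b| + |1 / Real.Gamma (b + 1)| * K, fun x hx => ?_⟩
    rw [hint x hx]
    have hx0 := hx.1.ne'
    have h4 : (1 / x) * (x ^ (b + 1) * TT (b + 1) χ x) = x ^ b * TT (b + 1) χ x := by
      rw [Real.rpow_add_one hx0]; field_simp
    rw [mul_assoc (1 / Real.Gamma (b + 1)), h4]
    have hp1 : 0 ≤ x ^ (b - 1) := Real.rpow_nonneg hx.1.le _
    have hp2 : 0 ≤ x ^ b := Real.rpow_nonneg hx.1.le _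
    have h5 : |x ^ b * TT (b + 1) χ x| ≤ K * x ^ (b - 1) := by
      rw [abs_mul, abs_of_nonneg hp2]
      calc x ^ b * |TT (b + 1) χ x| ≤ x ^ b * (K * x ^ b) := by gcongr; exact hKb x hx
        _ = K * x ^ (b + b) := by rw [Real.rpow_add hx.1]; ring
        _ ≤ K * x ^ (b - 1) := by
          gcongr ?_ * ?_
          exact Real.rpow_le_rpow_of_exponent_ge hx.1 hx.2 (by linarith)
    refine (abs_add_le _ _).trans ?_
    rw [abs_mul, abs_mul (1 / Real.Gamma (b + 1)), abs_of_nonneg hp1]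
    have := mul_le_mul_of_nonneg_left h5 (abs_nonneg (1 / Real.Gamma (b + 1)))
    linarith

theorem stmt9 (m : ℕ) (hm : 0 < m) (σ : ℝ) (hσ1 : (m:ℝ) - 1 < σ) (hσ2 : σ < m)
    (p : Polynomial ℝ) (hp : p.degree ≤ (m - 1 : ℕ))
    (φ : ℝ → ℝ) (hφc : ContinuousOn φ (Set.Icc 0 1))
    (hφ2 : ContDiffOn ℝ 2 φ (Set.Ioc 0 1))
    (C₀ : ℝ)
    (hφb1 : ∀ s ∈ Set.Ioc (0:ℝ) 1,
      |derivWithin φ (Set.Icc 0 1) s| ≤ C₀ * s ^ (σ - m))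
    (hφb2 : ∀ s ∈ Set.Ioc (0:ℝ) 1,
      |derivWithin (derivWithin φ (Set.Icc 0 1)) (Set.Icc 0 1) s| ≤ C₀ * s ^ (σ - m - 1)) :
    ContDiffOn ℝ (m + 1) (rfun σ p φ) (Set.Ioc 0 1) ∧
    (∀ x ∈ Set.Ioc (0:ℝ) 1,
      iteratedDerivWithin (m + 1) (rfun σ p φ) (Set.Icc 0 1) x
        = (φ 0 / Real.Gamma (σ - m)) * x ^ (σ - m - 1)
          + (1 / Real.Gamma (σ - m + 1)) * (1 / x) *
              ∫ s in (0:ℝ)..x, (x - s) ^ (σ - m) *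
                (s * derivWithin (derivWithin φ (Set.Icc 0 1)) (Set.Icc 0 1) s
                  + (σ - m + 1) * derivWithin φ (Set.Icc 0 1) s)) ∧
    ∃ C : ℝ, ∀ x ∈ Set.Ioc (0:ℝ) 1,
      |iteratedDerivWithin (m + 1) (rfun σ p φ) (Set.Icc 0 1) x| ≤ C * x ^ (σ - m - 1) := by
  have hu := uniqueDiffOn_Ioc (0:ℝ) 1
  have hset : ∀ (f : ℝ → ℝ), ∀ s ∈ Ioc (0:ℝ) 1,
      derivWithin f (Icc 0 1) s = derivWithin f (Ioc 0 1) s := fun f s hs =>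
    derivWithin_congr_set (set_ev hs)
  have h2 : ContDiffOn ℝ (1 + 1) φ (Ioc 0 1) := by
    convert hφ2 using 1; norm_num
  rw [contDiffOn_succ_iff_derivWithin hu] at h2
  have h1 : ContDiffOn ℝ (0 + 1) (derivWithin φ (Icc 0 1)) (Ioc 0 1) := by
    rw [zero_add]
    exact h2.2.2.congr (hset φ)
  have h1' := (contDiffOn_succ_iff_derivWithin hu).1 h1
  have hd1 : ∀ s ∈ Ioc (0:ℝ) 1,
      HasDerivWithinAt φ (derivWithin φ (Icc 0 1) s) (Ioc 0 1) s := fun s hs => by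
    rw [hset φ s hs]; exact (h2.1 s hs).hasDerivWithinAt
  have hd2 : ∀ s ∈ Ioc (0:ℝ) 1, HasDerivWithinAt (derivWithin φ (Icc 0 1))
      (derivWithin (derivWithin φ (Icc 0 1)) (Icc 0 1) s) (Ioc 0 1) s := fun s hs => by
    rw [hset _ s hs]; exact (h1'.1 s hs).hasDerivWithinAt
  have hc2 : ContinuousOn (derivWithin (derivWithin φ (Icc 0 1)) (Icc 0 1)) (Ioc 0 1) :=
    h1'.2.2.continuousOn.congr (hset _)
  have hC₀ : 0 ≤ C₀ := by
    have := (abs_nonneg _).trans (hφb1 1 (by simp))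
    simpa using this
  have hcls : Cls (σ - m) φ (derivWithin φ (Icc 0 1)) :=
    ⟨hφc, hd1, h1.continuousOn, C₀, hC₀, hφb1⟩
  obtain ⟨⟨hA, hB⟩, C, hC⟩ := main_aux m hm σ hσ1 hσ2 p hp φ _ _ hcls hd2 hc2 C₀ hφb2
  have hB' : ∀ x ∈ Ioc (0:ℝ) 1, iteratedDerivWithin (m + 1) (rfun σ p φ) (Icc 0 1) x
      = iteratedDerivWithin (m + 1) (rfun σ p φ) (Ioc 0 1) x := fun x hx => by
    unfold iteratedDerivWithin
    rw [iteratedFDerivWithin_congr_set (set_ev hx)]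
  refine ⟨by exact_mod_cast hA, fun x hx => ?_, C, fun x hx => ?_⟩
  · rw [hB' x hx, hB x hx]
  · rw [hB' x hx, hB x hx]; exact hC x hx
end
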